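/- Let 1 < c < 11/6 and let 0 < ε < 10^{-10} be a sufficiently small constant. Then Σ_{n ≤ x, ⌊n^c⌋ cube-free} 1 = x/ζ(3) + O(x^{1-ε}). -/

import Mathlib

open Filter Asymptotics Finset
open scoped Classical

/-- A natural number is cube-free if no prime cube divides it. -/
def CubeFree (n : ℕ) : Prop := ∀ p : ℕ, p.Prime → ¬ p ^ 3 ∣ n

/-- `ζ(3) = ∑ 1/n³`. -/
noncomputable def zeta3 : ℝ := ∑' n : ℕ, 1 / (n : ℝ) ^ 3

/-- The additive character. -/
noncomputable def ee (t : ℝ) : ℂ := Complex.exp (((2 * Real.pi * t : ℝ) : ℂ) * Complex.I)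

lemma ee_norm (t : ℝ) : ‖ee t‖ = 1 := Complex.norm_exp_ofReal_mul_I _

lemma ee_add (a b : ℝ) : ee (a + b) = ee a * ee b := by
  unfold ee; rw [← Complex.exp_add]; congr 1; push_cast; ring

lemma ee_int (k : ℤ) : ee k = 1 := by
  unfold ee; rw [Complex.exp_eq_one_iff]; exact ⟨k, by push_cast; ring⟩

lemma ee_zero : ee 0 = 1 := by simpa using ee_int 0

lemma ee_neg (t : ℝ) : ee (-t) = (starRingEnd ℂ) (ee t) := by
  unfold ee; rw [← Complex.exp_conj]; congr 1; rw [map_mul, Complex.conj_ofReal, Complex.conj_I]; push_cast; ring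

lemma ee_sub_int (t : ℝ) (k : ℤ) : ee (t - k) = ee t := by
  have := ee_add (t - k) k
  rw [ee_int, mul_one, sub_add_cancel] at this
  exact this.symm

lemma ee_eq (t : ℝ) : ee t = (Real.cos (2 * Real.pi * t) : ℂ) + (Real.sin (2 * Real.pi * t) : ℂ) * Complex.I := by
  unfold ee; rw [Complex.exp_mul_I, Complex.ofReal_cos, Complex.ofReal_sin]

lemma ee_re (t : ℝ) : (ee t).re = Real.cos (2 * Real.pi * t) := by
  rw [ee_eq]; simp [-Complex.ofReal_cos, -Complex.ofReal_sin]

/-- `cot (π t)` -/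
noncomputable def ct (t : ℝ) : ℝ := Real.cos (Real.pi * t) / Real.sin (Real.pi * t)

noncomputable def ww (t : ℝ) : ℂ := 1 / 2 + ((ct t / 2 : ℝ) : ℂ) * Complex.I

lemma ww_mul (t : ℝ) (h : Real.sin (Real.pi * t) ≠ 0) : (1 - ee t) * ww t = 1 := by
  have h2 : 2 * Real.pi * t = 2 * (Real.pi * t) := by ring
  rw [ee_eq, h2, Real.cos_two_mul, Real.sin_two_mul, ww, ct]
  have hs := Real.sin_sq_add_cos_sq (Real.pi * t)
  set s := Real.sin (Real.pi * t)
  set c := Real.cos (Real.pi * t)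
  apply Complex.ext
  · simp [pow_two]
    field_simp
    ring
  · simp [pow_two]
    field_simp
    linear_combination (-2 * c) * hs

lemma sin_lower {Δ t : ℝ} (hΔ : 0 < Δ) (h1 : Δ ≤ t) (h2 : t ≤ 1 - Δ) :
    2 * Δ ≤ Real.sin (Real.pi * t) := by
  have hp := Real.pi_pos
  rcases le_total t (1/2) with h | h
  · have := Real.mul_le_sin (x := Real.pi * t) (by nlinarith) (by nlinarith)
    have e : 2 / Real.pi * (Real.pi * t) = 2 * t := by field_simp
    linarith
  · have := Real.mul_le_sin (x := Real.pi * (1 - t)) (by nlinarith) (by nlinarith)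
    have e : 2 / Real.pi * (Real.pi * (1 - t)) = 2 * (1 - t) := by field_simp
    have e2 : Real.sin (Real.pi * (1 - t)) = Real.sin (Real.pi * t) := by
      rw [mul_sub, mul_one, Real.sin_pi_sub]
    rw [e, e2] at this
    linarith

lemma ct_abs {Δ t : ℝ} (hΔ : 0 < Δ) (h1 : Δ ≤ t) (h2 : t ≤ 1 - Δ) : |ct t| ≤ 1 / (2 * Δ) := by
  have hs := sin_lower hΔ h1 h2
  rw [ct, abs_div, abs_of_pos (a := Real.sin _) (by linarith)]
  exact div_le_div₀ (by norm_num) (Real.abs_cos_le_one _) (by linarith) hs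

lemma ct_anti {s t : ℝ} (hs : 0 < s) (hst : s ≤ t) (ht : t < 1) : ct t ≤ ct s := by
  have hp := Real.pi_pos
  have h1 : 0 < Real.sin (Real.pi * s) := Real.sin_pos_of_pos_of_lt_pi (by positivity) (by nlinarith)
  have h2 : 0 < Real.sin (Real.pi * t) :=
    Real.sin_pos_of_pos_of_lt_pi (mul_pos hp (by linarith)) (by nlinarith)
  have h3 : 0 ≤ Real.sin (Real.pi * t - Real.pi * s) :=
    Real.sin_nonneg_of_nonneg_of_le_pi (by nlinarith) (by nlinarith)
  rw [Real.sin_sub] at h3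
  rw [ct, ct, div_le_div_iff₀ h2 h1]
  linarith

lemma ww_norm {Δ t : ℝ} (hΔ : 0 < Δ) (h1 : Δ ≤ t) (h2 : t ≤ 1 - Δ) : ‖ww t‖ ≤ 1 / (2 * Δ) := by
  have h := ct_abs hΔ h1 h2
  have hΔ2 : 1 ≤ 1 / (2 * Δ) := by rw [le_div_iff₀ (by positivity)]; linarith
  calc ‖ww t‖ ≤ ‖(1 / 2 : ℂ)‖ + ‖((ct t / 2 : ℝ) : ℂ) * Complex.I‖ := norm_add_le _ _
    _ = 1 / 2 + |ct t| / 2 := by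
        rw [norm_mul, Complex.norm_I, Complex.norm_real, Real.norm_eq_abs, abs_div]; norm_num
    _ ≤ _ := by linarith

lemma ww_sub (s t : ℝ) : ‖ww t - ww s‖ = |ct t - ct s| / 2 := by
  have : ww t - ww s = (((ct t - ct s) / 2 : ℝ) : ℂ) * Complex.I := by
    unfold ww; push_cast; ring
  rw [this, norm_mul, Complex.norm_I, Complex.norm_real, Real.norm_eq_abs, abs_div]; norm_num

lemma kusmin_landau (f : ℕ → ℝ) (a b : ℕ) (k : ℤ) (Δ : ℝ) (hΔ : 0 < Δ)
    (hmono : ∀ n, a ≤ n → n + 1 < b → f (n + 1) - f n ≤ f (n + 2) - f (n + 1))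
    (hlo : ∀ n, a ≤ n → n < b → k + Δ ≤ f (n + 1) - f n)
    (hhi : ∀ n, a ≤ n → n < b → f (n + 1) - f n ≤ k + 1 - Δ) :
    ‖∑ n ∈ Ico a b, ee (f n)‖ ≤ 2 / Δ := by
  rcases le_or_gt b a with hab | hab
  · rw [Ico_eq_empty (by omega)]; simp; positivity
  set G : ℕ → ℝ := fun n => f (n + 1) - f n - k with hG
  have hGlo : ∀ n, a ≤ n → n < b → Δ ≤ G n := fun n h1 h2 => by
    have := hlo n h1 h2; simp only [hG]; linarith
  have hGhi : ∀ n, a ≤ n → n < b → G n ≤ 1 - Δ := fun n h1 h2 => by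
    have := hhi n h1 h2; simp only [hG]; linarith
  have key : ∀ n, a ≤ n → n < b → ee (f n) + ee (f (n+1)) * ww (G n) = ee (f n) * ww (G n) := by
    intro n h1 h2
    have hs := sin_lower hΔ (hGlo n h1 h2) (hGhi n h1 h2)
    have h3 := ww_mul (G n) (by linarith)
    have h4 : ee (f (n+1)) = ee (f n) * ee (G n) := by
      rw [hG]; simp only; rw [ee_sub_int, ← ee_add]; congr 1; ring
    rw [h4]
    linear_combination (-ee (f n)) * h3
  have ind : ∀ m, a + m + 1 ≤ b →
      ‖∑ n ∈ Ico a (a + m + 1), ee (f n) + ee (f (a + m + 1)) * ww (G (a + m))‖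
        ≤ ‖ww (G a)‖ + (ct (G a) - ct (G (a + m))) / 2 := by
    intro m
    induction m with
    | zero =>
      intro h
      simp only [add_zero, Nat.Ico_succ_singleton, sum_singleton]
      rw [key a le_rfl (by omega), norm_mul, ee_norm]; simp
    | succ m ih =>
      intro h
      have ih := ih (by omega)
      have hk := key (a + m + 1) (by omega) (by omega)
      rw [sum_Ico_succ_top (by omega : a ≤ a + (m + 1))]
      have e1 : ∑ n ∈ Ico a (a + (m + 1)), ee (f n) + ee (f (a + (m + 1))) + ee (f (a + (m + 1) + 1)) * ww (G (a + (m + 1)))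
          = (∑ n ∈ Ico a (a + m + 1), ee (f n) + ee (f (a + m + 1)) * ww (G (a + m)))
            + ee (f (a + m + 1)) * (ww (G (a + m + 1)) - ww (G (a + m))) := by
        have : a + (m + 1) = a + m + 1 := by ring
        rw [this]
        linear_combination hk
      rw [e1]
      have hle : G (a + m) ≤ G (a + m + 1) := by
        have := hmono (a + m) (by omega) (by omega)
        simp only [hG]; linarith
      have hct : ct (G (a + m + 1)) ≤ ct (G (a + m)) := by
        apply ct_anti _ hle
        · have := hGhi (a + m + 1) (by omega) (by omega); linarith
        · have := hGlo (a + m) (by omega) (by omega); linarith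
      have hn : ‖ee (f (a + m + 1)) * (ww (G (a + m + 1)) - ww (G (a + m)))‖ = (ct (G (a + m)) - ct (G (a + m + 1))) / 2 := by
        rw [norm_mul, ee_norm, one_mul, ww_sub, abs_of_nonpos (by linarith)]; ring
      refine (norm_add_le _ _).trans ?_
      rw [hn]
      have : a + (m + 1) = a + m + 1 := by ring
      rw [this]
      linarith
  obtain ⟨m, rfl⟩ : ∃ m, b = a + m + 1 := ⟨b - a - 1, by omega⟩
  have h1 := ind m le_rfl
  have h2 := ww_norm hΔ (hGlo a le_rfl (by omega)) (hGhi a le_rfl (by omega))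
  have h3 := ww_norm hΔ (hGlo (a + m) (by omega) (by omega)) (hGhi (a+m) (by omega) (by omega))
  have h4 := abs_le.1 (ct_abs hΔ (hGlo a le_rfl (by omega)) (hGhi a le_rfl (by omega)))
  have h5 := abs_le.1 (ct_abs hΔ (hGlo (a + m) (by omega) (by omega)) (hGhi (a+m) (by omega) (by omega)))
  have h6 : ‖∑ n ∈ Ico a (a + m + 1), ee (f n)‖ ≤ ‖∑ n ∈ Ico a (a + m + 1), ee (f n) + ee (f (a + m + 1)) * ww (G (a + m))‖ + ‖ww (G (a+m))‖ := by
    have := norm_sub_le (∑ n ∈ Ico a (a + m + 1), ee (f n) + ee (f (a + m + 1)) * ww (G (a + m))) (ee (f (a + m + 1)) * ww (G (a + m)))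
    rwa [add_sub_cancel_right, norm_mul, ee_norm, one_mul] at this
  have e : 2 / Δ = 4 * (1 / (2 * Δ)) := by field_simp; norm_num
  rw [e]
  have : 0 < 1 / (2 * Δ) := by positivity
  linarith [h4.1, h4.2, h5.1, h5.2]

lemma ordConnected_eq_Ico (s : Finset ℕ) (h : ∀ x ∈ s, ∀ y ∈ s, ∀ z, x ≤ z → z ≤ y → z ∈ s) :
    ∃ a b, s = Ico a b := by
  rcases s.eq_empty_or_nonempty with rfl | hs
  · exact ⟨0, 0, by simp⟩
  · refine ⟨s.min' hs, s.max' hs + 1, ?_⟩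
    ext z
    simp only [mem_Ico, Nat.lt_succ_iff]
    constructor
    · intro hz; exact ⟨s.min'_le z hz, s.le_max' z hz⟩
    · intro hz; exact h _ (s.min'_mem hs) _ (s.max'_mem hs) z hz.1 hz.2

/-- The van der Corput second derivative test, in discrete form. -/
lemma vdc (f : ℕ → ℝ) (a b : ℕ) (lam A : ℝ) (hlam : 0 < lam) (hA : 1 ≤ A)
    (hlo : ∀ n, a ≤ n → n < b → lam ≤ (f (n + 2) - f (n + 1)) - (f (n + 1) - f n))
    (hhi : ∀ n, a ≤ n → n < b → (f (n + 2) - f (n + 1)) - (f (n + 1) - f n) ≤ A * lam) :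
    ‖∑ n ∈ Ico a b, ee (f n)‖ ≤ 12 * ((b - a : ℕ) * A * √lam + 1 / √lam) := by
  set r := √lam with hr
  have hr0 : 0 < r := Real.sqrt_pos.2 hlam
  have hr2 : lam = r * r := (Real.mul_self_sqrt hlam.le).symm
  rcases le_or_gt b a with hab | hab
  · rw [Ico_eq_empty (by omega)]; simp; positivity
  rcases le_or_gt 1 r with h1 | h1
  · have : ‖∑ n ∈ Ico a b, ee (f n)‖ ≤ (b - a : ℕ) := by
      refine (norm_sum_le _ _).trans ?_
      simp [ee_norm]
    have h2 : ((b - a : ℕ) : ℝ) ≤ (b - a : ℕ) * A * r := by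
      have : 1 ≤ A * r := by nlinarith
      have h0 : (0:ℝ) ≤ (b - a : ℕ) := by positivity
      nlinarith
    have h3 : 0 < 1 / r := by positivity
    have h0 : (0:ℝ) ≤ (b - a : ℕ) * A * r := by positivity
    linarith
  set g : ℕ → ℝ := fun n => f (n + 1) - f n with hg
  have glo : ∀ n, a ≤ n → n < b → g n + lam ≤ g (n + 1) := fun n h1 h2 => by
    have := hlo n h1 h2; simp only [hg]; linarith
  have ghi : ∀ n, a ≤ n → n < b → g (n + 1) ≤ g n + A * lam := fun n h1 h2 => by
    have := hhi n h1 h2; simp only [hg]; linarith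
  have glo' : ∀ j n, a ≤ n → n + j ≤ b → g n + j * lam ≤ g (n + j) := by
    intro j n hn
    induction j with
    | zero => intro _; simp
    | succ j ih =>
      intro h
      have := ih (by omega)
      have h2 := glo (n + j) (by omega) (by omega)
      rw [← add_assoc]; push_cast; linarith
  have ghi' : ∀ j n, a ≤ n → n + j ≤ b → g (n + j) ≤ g n + j * (A * lam) := by
    intro j n hn
    induction j with
    | zero => intro _; simp
    | succ j ih =>
      intro h
      have := ih (by omega)
      have h2 := ghi (n + j) (by omega) (by omega)
      rw [← add_assoc]; push_cast; linarith
  have gmono : ∀ n m, a ≤ n → n ≤ m → m ≤ b → g n ≤ g m := by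
    intro n m h1 h2 h3
    obtain ⟨j, rfl⟩ := Nat.exists_eq_add_of_le h2
    have := glo' j n h1 h3
    have : (0:ℝ) ≤ j * lam := by positivity
    linarith
  have filt : ∀ u v : ℝ → Prop, (∀ x y, x ≤ y → u x → u y) → (∀ x y, x ≤ y → v y → v x) →
      ∃ a' b', (Ico a b).filter (fun n => u (g n) ∧ v (g n)) = Ico a' b' := by
    intro u v hu hv
    apply ordConnected_eq_Ico
    intro x hx y hy z hxz hzy
    simp only [mem_filter, mem_Ico] at hx hy ⊢
    refine ⟨⟨by omega, by omega⟩, hu _ _ (gmono x z (by omega) hxz (by omega)) hx.2.1,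
      hv _ _ (gmono z y (by omega) hzy (by omega)) hy.2.2⟩
  have cnt : ∀ (s : Finset ℕ) (a' b' : ℕ) (u v : ℝ), s = Ico a' b' → s ⊆ Ico a b →
      (∀ n ∈ s, u ≤ g n ∧ g n ≤ v) → u ≤ v → (s.card : ℝ) ≤ (v - u) / lam + 1 := by
    intro s a' b' u v hs hsub huv huv'
    rcases le_or_gt b' a' with h | h
    · rw [hs, Ico_eq_empty (by omega)]; simp
      have : 0 ≤ (v - u) / lam := div_nonneg (by linarith) hlam.le
      linarith
    · have m1 : a' ∈ s := by rw [hs]; simp; omega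
      have m2 : b' - 1 ∈ s := by rw [hs]; simp; omega
      have k1 := mem_Ico.1 (hsub m1)
      have k2 := mem_Ico.1 (hsub m2)
      have := glo' (b' - 1 - a') a' k1.1 (by omega)
      rw [show a' + (b' - 1 - a') = b' - 1 by omega] at this
      have h1 := (huv _ m1).1
      have h2 := (huv _ m2).2
      have h3 : ((b' - 1 - a' : ℕ) : ℝ) ≤ (v - u) / lam := by
        rw [le_div_iff₀ hlam]; linarith
      rw [hs, Nat.card_Ico]
      have : ((b' - a' : ℕ) : ℝ) = ((b' - 1 - a' : ℕ) : ℝ) + 1 := by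
        rw [show b' - a' = (b' - 1 - a') + 1 by omega]; push_cast; ring
      linarith
  have triv : ∀ s : Finset ℕ, ‖∑ n ∈ s, ee (f n)‖ ≤ s.card := by
    intro s
    refine (norm_sum_le _ _).trans ?_
    simp [ee_norm]
  have perk : ∀ k : ℤ, ‖∑ n ∈ (Ico a b).filter (fun n => ⌊g n⌋ = k), ee (f n)‖ ≤ 6 / r := by
    intro k
    set s := (Ico a b).filter (fun n => ⌊g n⌋ = k) with hs
    have e1 := sum_filter_add_sum_filter_not s (fun n => g n < k + r) (fun n => ee (f n))
    have e2 := sum_filter_add_sum_filter_not (s.filter (fun n => ¬ g n < k + r)) (fun n => g n ≤ k + 1 - r) (fun n => ee (f n))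
    set s1 := s.filter (fun n => g n < k + r)
    set s2 := (s.filter (fun n => ¬ g n < k + r)).filter (fun n => g n ≤ k + 1 - r)
    set s3 := (s.filter (fun n => ¬ g n < k + r)).filter (fun n => ¬ g n ≤ k + 1 - r)
    have c1 : s1 = (Ico a b).filter (fun n => ((k:ℝ) ≤ g n) ∧ (g n < k + 1 ∧ g n < k + r)) := by
      ext n; simp only [s1, hs, mem_filter, Int.floor_eq_iff]; tauto
    have c2 : s2 = (Ico a b).filter (fun n => ((k:ℝ) ≤ g n ∧ k + r ≤ g n) ∧ (g n < k + 1 ∧ g n ≤ k + 1 - r)) := by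
      ext n; simp only [s2, hs, mem_filter, Int.floor_eq_iff, not_lt]; tauto
    have c3 : s3 = (Ico a b).filter (fun n => ((k:ℝ) ≤ g n ∧ k + r ≤ g n ∧ k + 1 - r < g n) ∧ (g n < k + 1)) := by
      ext n; simp only [s3, hs, mem_filter, Int.floor_eq_iff, not_lt, not_le]; tauto
    have b1 : ‖∑ n ∈ s1, ee (f n)‖ ≤ 2 / r := by
      refine (triv s1).trans ?_
      obtain ⟨a', b', h⟩ := filt (fun y => (k:ℝ) ≤ y) (fun y => y < k + 1 ∧ y < k + r)
        (fun x y h1 h2 => h2.trans h1) (fun x y h1 h2 => ⟨h1.trans_lt h2.1, h1.trans_lt h2.2⟩)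
      have := cnt s1 a' b' k (k + r) (c1.trans (by convert h)) (by rw [c1]; exact filter_subset _ _)
        (by intro n hn; rw [c1, mem_filter] at hn; exact ⟨hn.2.1, hn.2.2.2.le⟩) (by linarith)
      refine this.trans ?_
      rw [hr2]
      have : (k + r - k) / (r * r) = 1 / r := by field_simp; ring
      rw [this]
      have : 1 ≤ 1 / r := by rw [le_div_iff₀ hr0]; linarith
      have e : 2 / r = 1 / r + 1 / r := by ring
      linarith
    have b3 : ‖∑ n ∈ s3, ee (f n)‖ ≤ 2 / r := by
      refine (triv s3).trans ?_
      obtain ⟨a', b', h⟩ := filt (fun y => (k:ℝ) ≤ y ∧ k + r ≤ y ∧ k + 1 - r < y) (fun y => y < k + 1)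
        (fun x y h1 h2 => ⟨by linarith, by linarith, by linarith⟩) (fun x y h1 h2 => h1.trans_lt h2)
      have := cnt s3 a' b' (k + 1 - r) (k + 1) (c3.trans (by convert h)) (by rw [c3]; exact filter_subset _ _)
        (by intro n hn; rw [c3, mem_filter] at hn; exact ⟨hn.2.1.2.2.le, hn.2.2.le⟩) (by linarith)
      refine this.trans ?_
      rw [hr2]
      have : (k + 1 - (k + 1 - r)) / (r * r) = 1 / r := by field_simp; ring
      rw [this]
      have : 1 ≤ 1 / r := by rw [le_div_iff₀ hr0]; linarith
      have e : 2 / r = 1 / r + 1 / r := by ring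
      linarith
    have b2 : ‖∑ n ∈ s2, ee (f n)‖ ≤ 2 / r := by
      obtain ⟨a', b', h⟩ := filt (fun y => (k:ℝ) ≤ y ∧ k + r ≤ y) (fun y => y < k + 1 ∧ y ≤ k + 1 - r)
        (fun x y h1 h2 => ⟨by linarith, by linarith⟩) (fun x y h1 h2 => ⟨by linarith, by linarith⟩)
      have hm : ∀ n, a' ≤ n → n < b' → (a ≤ n ∧ n < b) ∧ ((k:ℝ) ≤ g n ∧ k + r ≤ g n) ∧ (g n < k + 1 ∧ g n ≤ k + 1 - r) := by
        intro n h1 h2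
        have : n ∈ Ico a' b' := by simp; omega
        rw [← h] at this
        simpa using this
      rw [c2.trans (by convert h : _ = Ico a' b')]
      apply kusmin_landau f a' b' k r hr0
      · intro n h1 h2
        have q := (hm n h1 (by omega)).1
        have := glo n q.1 q.2
        simp only [hg] at this
        linarith
      · intro n h1 h2
        exact (hm n h1 h2).2.1.2
      · intro n h1 h2
        exact (hm n h1 h2).2.2.2
    rw [← e1, ← e2]
    have t1 := norm_add_le (∑ n ∈ s1, ee (f n)) (∑ n ∈ s2, ee (f n) + ∑ n ∈ s3, ee (f n))
    have t2 := norm_add_le (∑ n ∈ s2, ee (f n)) (∑ n ∈ s3, ee (f n))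
    have e : 6 / r = 2 / r + 2 / r + 2 / r := by ring
    linarith
  have hmap : ∀ n ∈ Ico a b, ⌊g n⌋ ∈ Icc ⌊g a⌋ ⌊g (b - 1)⌋ := by
    intro n hn
    rw [mem_Ico] at hn
    rw [mem_Icc]
    exact ⟨Int.floor_le_floor (gmono a n le_rfl hn.1 (by omega)), Int.floor_le_floor (gmono n (b - 1) hn.1 (by omega) (by omega))⟩
  rw [← sum_fiberwise_of_maps_to hmap]
  refine (norm_sum_le _ _).trans ?_
  refine (sum_le_sum (fun k _ => perk k)).trans ?_
  rw [sum_const, nsmul_eq_mul]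
  have hcard : ((Icc ⌊g a⌋ ⌊g (b - 1)⌋).card : ℝ) ≤ (b - a : ℕ) * (A * lam) + 2 - A * lam := by
    rw [Int.card_Icc]
    have h1 : ⌊g a⌋ ≤ ⌊g (b - 1)⌋ := Int.floor_le_floor (gmono a (b-1) le_rfl (by omega) (by omega))
    have h2 : (((⌊g (b - 1)⌋ + 1 - ⌊g a⌋).toNat : ℕ) : ℝ) = ⌊g (b - 1)⌋ + 1 - ⌊g a⌋ := by
      have : (((⌊g (b - 1)⌋ + 1 - ⌊g a⌋).toNat : ℤ)) = ⌊g (b - 1)⌋ + 1 - ⌊g a⌋ := Int.toNat_of_nonneg (by omega)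
      exact_mod_cast this
    rw [h2]
    have h3 := ghi' (b - 1 - a) a le_rfl (by omega)
    rw [show a + (b - 1 - a) = b - 1 by omega] at h3
    have h4 : ((b - a : ℕ) : ℝ) = ((b - 1 - a : ℕ) : ℝ) + 1 := by
      rw [show b - a = (b - 1 - a) + 1 by omega]; push_cast; ring
    rw [h4]
    have h5 := Int.floor_le (g (b - 1))
    have h6 := Int.lt_floor_add_one (g a)
    linarith
  have hpos : 0 < A * lam := by positivity
  calc ((Icc ⌊g a⌋ ⌊g (b - 1)⌋).card : ℝ) * (6 / r) ≤ ((b - a : ℕ) * (A * lam) + 2) * (6 / r) := by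
        apply mul_le_mul_of_nonneg_right _ (by positivity); linarith
    _ = 6 * ((b - a : ℕ) * A * r) + 12 * (1 / r) := by rw [hr2]; field_simp; ring
    _ ≤ 12 * ((b - a : ℕ) * A * r + 1 / r) := by
        have : (0:ℝ) ≤ (b - a : ℕ) * A * r := by positivity
        linarith

noncomputable def bb (t : ℝ) : ℝ := t ^ 2 - t + 6⁻¹

noncomputable def Zc : ℝ := ∑' h : ℕ, √(h : ℝ) / (h : ℝ) ^ 2

lemma Zc_summable : Summable (fun h : ℕ => √(h : ℝ) / (h : ℝ) ^ 2) := by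
  have h := (Real.summable_nat_rpow_inv (p := 3/2)).2 (by norm_num)
  refine h.congr (fun n => ?_)
  rcases Nat.eq_zero_or_pos n with rfl | hn
  · simp
  · have hn' : (0:ℝ) < n := by exact_mod_cast hn
    rw [Real.sqrt_eq_rpow, ← Real.rpow_natCast, ← Real.rpow_sub hn', ← Real.rpow_neg hn'.le]
    norm_num

lemma Zc_nonneg : 0 ≤ Zc := tsum_nonneg (fun h => by positivity)

lemma hasSum_bb (z : ℝ) :
    HasSum (fun h : ℕ => 1 / (h : ℝ) ^ 2 * (ee (h * z)).re) (Real.pi ^ 2 * bb (Int.fract z)) := by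
  have h := hasSum_one_div_nat_pow_mul_cos (k := 1) one_ne_zero (x := Int.fract z)
    ⟨Int.fract_nonneg z, (Int.fract_lt_one z).le⟩
  have e : (-1 : ℝ) ^ (1 + 1) * (2 * Real.pi) ^ (2 * 1) / 2 / ((2 * 1).factorial : ℝ) *
        (Polynomial.map (algebraMap ℚ ℝ) (Polynomial.bernoulli (2 * 1))).eval (Int.fract z)
      = Real.pi ^ 2 * bb (Int.fract z) := by
    have := bernoulliFun_two (Int.fract z)
    unfold bernoulliFun at this
    rw [show 2 * 1 = 2 from rfl, this, bb]
    simp only [Nat.factorial]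
    push_cast
    ring
  rw [e] at h
  convert h using 2 with n
  rw [ee_re]
  congr 1
  have : 2 * Real.pi * (n * z) = 2 * Real.pi * n * Int.fract z + ((n * ⌊z⌋ : ℤ) : ℝ) * (2 * Real.pi) := by
    conv_lhs => rw [← Int.floor_add_fract z]
    push_cast; ring
  rw [this, Real.cos_add_int_mul_two_pi]

lemma bb_sum (s : Finset ℕ) (y : ℕ → ℝ) (R : ℝ)
    (hR : ∀ h : ℕ, 1 ≤ h → ‖∑ n ∈ s, ee (h * y n)‖ ≤ R * √(h : ℝ)) (β : ℝ) :
    |∑ n ∈ s, bb (Int.fract (y n + β))| ≤ Zc * R := by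
  have h1 := hasSum_sum (s := s) (fun n _ => hasSum_bb (y n + β))
  rw [← mul_sum] at h1
  have hR0 : 0 ≤ R := by
    have := hR 1 le_rfl
    simp at this
    exact (norm_nonneg _).trans this
  have hb : ∀ h : ℕ, ‖∑ n ∈ s, 1 / (h : ℝ) ^ 2 * (ee (h * (y n + β))).re‖ ≤ (√(h : ℝ) / (h : ℝ) ^ 2) * R := by
    intro h
    rcases Nat.eq_zero_or_pos h with rfl | hh
    · simp
    rw [← mul_sum, norm_mul, Real.norm_eq_abs, Real.norm_eq_abs, abs_of_nonneg (by positivity)]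
    have : ∑ n ∈ s, (ee (h * (y n + β))).re = (ee (h * β) * ∑ n ∈ s, ee (h * y n)).re := by
      rw [mul_sum, Complex.re_sum]
      refine sum_congr rfl (fun n _ => ?_)
      rw [← ee_add]; congr 2; ring
    rw [this]
    have h2 := Complex.abs_re_le_norm (ee (h * β) * ∑ n ∈ s, ee (h * y n))
    rw [norm_mul, ee_norm, one_mul] at h2
    have h3 := h2.trans (hR h hh)
    calc _ ≤ 1 / (h : ℝ) ^ 2 * (R * √(h : ℝ)) := by gcongr
      _ = _ := by ring
  have h2 : ‖∑' h : ℕ, ∑ n ∈ s, 1 / (h : ℝ) ^ 2 * (ee (h * (y n + β))).re‖ ≤ Zc * R :=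
    tsum_of_norm_bounded (Zc_summable.hasSum.mul_right R) hb
  rw [h1.tsum_eq, Real.norm_eq_abs, abs_mul, abs_of_pos (by positivity)] at h2
  have h3 : 1 ≤ Real.pi ^ 2 := by nlinarith [Real.pi_gt_three]
  nlinarith [abs_nonneg (∑ n ∈ s, bb (Int.fract (y n + β)))]

lemma fract_cases (z Δ : ℝ) (h0 : 0 < Δ) (h1 : Δ < 1) :
    (Int.fract (z + Δ) = Int.fract z + Δ) ∨ (Int.fract (z + Δ) = Int.fract z + Δ - 1 ∧ 1 ≤ Int.fract z + Δ) := by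
  have hz0 := Int.fract_nonneg z
  have hz1 := Int.fract_lt_one z
  rcases lt_or_ge (Int.fract z + Δ) 1 with h | h
  · left
    rw [Int.fract_eq_iff]
    refine ⟨by linarith, h, ⌊z⌋, ?_⟩
    have := Int.floor_add_fract z; linarith
  · right
    refine ⟨?_, h⟩
    rw [Int.fract_eq_iff]
    refine ⟨by linarith, by linarith, ⌊z⌋ + 1, ?_⟩
    have := Int.floor_add_fract z; push_cast; linarith

lemma bb_up (z Δ : ℝ) (h0 : 0 < Δ) (h1 : Δ < 1) :
    (bb (Int.fract (z + Δ)) - bb (Int.fract z)) / (2 * Δ) ≤ Int.fract z - 1 / 2 + Δ / 2 := by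
  rw [div_le_iff₀ (by positivity)]
  unfold bb
  rcases fract_cases z Δ h0 h1 with h | ⟨h, h'⟩
  · rw [h]; nlinarith
  · rw [h]; nlinarith

lemma bb_down (z Δ : ℝ) (h0 : 0 < Δ) (h1 : Δ < 1) :
    Int.fract (z + Δ) - 1 / 2 - Δ / 2 ≤ (bb (Int.fract (z + Δ)) - bb (Int.fract z)) / (2 * Δ) := by
  rw [le_div_iff₀ (by positivity)]
  unfold bb
  have hz1 := Int.fract_lt_one z
  rcases fract_cases z Δ h0 h1 with h | ⟨h, h'⟩
  · rw [h]; nlinarith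
  · rw [h]; nlinarith

lemma psi_sum (s : Finset ℕ) (y : ℕ → ℝ) (R : ℝ)
    (hR : ∀ h : ℕ, 1 ≤ h → ‖∑ n ∈ s, ee (h * y n)‖ ≤ R * √(h : ℝ)) (β Δ : ℝ) (h0 : 0 < Δ) (h1 : Δ < 1) :
    |∑ n ∈ s, (Int.fract (y n + β) - 1 / 2)| ≤ s.card * Δ / 2 + Zc * R / Δ := by
  have b0 := abs_le.1 (bb_sum s y R hR β)
  have b1 := abs_le.1 (bb_sum s y R hR (β + Δ))
  have b2 := abs_le.1 (bb_sum s y R hR (β - Δ))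
  have u1 := sum_le_sum (s := s) (fun n _ => bb_up (y n + β) Δ h0 h1)
  have u2 : ∑ n ∈ s, ((Int.fract (y n + β) - 1 / 2) - Δ / 2)
      ≤ ∑ n ∈ s, (bb (Int.fract (y n + β)) - bb (Int.fract (y n + (β - Δ)))) / (2 * Δ) :=
    sum_le_sum (fun n _ => by
      have := bb_down (y n + (β - Δ)) Δ h0 h1
      rwa [show y n + (β - Δ) + Δ = y n + β by ring] at this)
  have e2 : ∑ n ∈ s, (bb (Int.fract (y n + β)) - bb (Int.fract (y n + (β - Δ))))
      = ∑ n ∈ s, bb (Int.fract (y n + β)) - ∑ n ∈ s, bb (Int.fract (y n + (β - Δ))) := sum_sub_distrib _ _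
  rw [← sum_div, sum_sub_distrib, sum_add_distrib, sum_const, nsmul_eq_mul] at u1
  rw [← sum_div, e2, sum_sub_distrib, sum_const, nsmul_eq_mul] at u2
  simp only [add_assoc] at u1
  set P := ∑ n ∈ s, bb (Int.fract (y n + β))
  set P1 := ∑ n ∈ s, bb (Int.fract (y n + (β + Δ)))
  set P2 := ∑ n ∈ s, bb (Int.fract (y n + (β - Δ)))
  have v1 : -(Zc * R / Δ) ≤ (P1 - P) / (2 * Δ) := by
    rw [← neg_div, div_le_div_iff₀ h0 (by positivity)]; nlinarith
  have v2 : (P - P2) / (2 * Δ) ≤ Zc * R / Δ := by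
    rw [div_le_div_iff₀ (by positivity) h0]; nlinarith
  rw [abs_le]
  constructor
  · linarith
  · linarith

lemma count_asymp (s : Finset ℕ) (y : ℕ → ℝ) (R : ℝ)
    (hR : ∀ h : ℕ, 1 ≤ h → ‖∑ n ∈ s, ee (h * y n)‖ ≤ R * √(h : ℝ)) (Δ : ℝ) (h0 : 0 < Δ) (h1 : Δ < 1)
    (q : ℕ) (hq : 1 ≤ q) :
    |((s.filter (fun n => Int.fract (y n) < 1 / (q : ℝ))).card : ℝ) - s.card / q| ≤ s.card * Δ + 2 * (Zc * R / Δ) := by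
  have hq' : (1:ℝ) ≤ q := by exact_mod_cast hq
  have hq0 : 0 < 1 / (q:ℝ) := by positivity
  have hq1 : 1 / (q:ℝ) ≤ 1 := by rw [div_le_one (by linarith)]; exact hq'
  have ind : ∀ z : ℝ, (if Int.fract z < 1 / (q:ℝ) then (1:ℝ) else 0) = 1 / q + (Int.fract (z + -(1 / (q:ℝ))) - 1 / 2) - (Int.fract (z + 0) - 1 / 2) := by
    intro z
    rw [add_zero]
    have hz0 := Int.fract_nonneg z
    have hz1 := Int.fract_lt_one z
    have hz := Int.floor_add_fract z
    split_ifs with h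
    · have : Int.fract (z + -(1 / (q:ℝ))) = Int.fract z - 1 / q + 1 := by
        rw [Int.fract_eq_iff]
        refine ⟨by linarith, by linarith, ⌊z⌋ - 1, ?_⟩
        push_cast; linarith
      rw [this]; ring
    · have : Int.fract (z + -(1 / (q:ℝ))) = Int.fract z - 1 / q := by
        rw [Int.fract_eq_iff]
        refine ⟨by linarith, by linarith, ⌊z⌋, ?_⟩
        linarith
      rw [this]; ring
  have e : ((s.filter (fun n => Int.fract (y n) < 1 / (q : ℝ))).card : ℝ) - s.card / q
      = ∑ n ∈ s, (Int.fract (y n + -(1 / (q:ℝ))) - 1 / 2) - ∑ n ∈ s, (Int.fract (y n + 0) - 1 / 2) := by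
    rw [card_filter]; push_cast
    rw [sum_congr rfl (fun n _ => ind (y n)), sum_sub_distrib, sum_add_distrib, sum_const, nsmul_eq_mul]
    ring
  rw [e]
  have p1 := psi_sum s y R hR (-(1 / (q:ℝ))) Δ h0 h1
  have p2 := psi_sum s y R hR 0 Δ h0 h1
  refine (abs_sub _ _).trans ?_
  linarith

lemma fejer (s : Finset ℕ) (y : ℕ → ℝ) (H : ℕ) (hH : 1 ≤ H) :
    ((s.filter (fun n => Int.fract (y n) < 1 / (6 * H : ℝ))).card : ℝ)
      ≤ 4 * s.card / H + 8 / H * ∑ h ∈ Ico 1 H, ‖∑ n ∈ s, ee (h * y n)‖ := by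
  have hH' : (1:ℝ) ≤ H := by exact_mod_cast hH
  set S : ℤ → ℂ := fun h => ∑ n ∈ s, ee (h * y n) with hS
  have hSneg : ∀ h, ‖S (-h)‖ = ‖S h‖ := by
    intro h
    have : S (-h) = (starRingEnd ℂ) (S h) := by
      simp only [hS, map_sum]
      refine sum_congr rfl (fun n _ => ?_)
      rw [← ee_neg]; congr 1; push_cast; ring
    rw [this, RCLike.norm_conj]
  have low : ∀ n ∈ s.filter (fun n => Int.fract (y n) < 1 / (6 * H : ℝ)),
      (H:ℝ) ^ 2 / 4 ≤ ‖∑ h ∈ range H, ee (h * y n)‖ ^ 2 := by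
    intro n hn
    have hn := (mem_filter.1 hn).2
    have h0 := Int.fract_nonneg (y n)
    have hre : (H:ℝ) / 2 ≤ (∑ h ∈ range H, ee (h * y n)).re := by
      rw [Complex.re_sum]
      have : ∀ h ∈ range H, (1/2 : ℝ) ≤ (ee (h * y n)).re := by
        intro h hh
        have hh : (h:ℝ) ≤ H := by exact_mod_cast (mem_range.1 hh).le
        have e : h * y n = h * Int.fract (y n) + ((h * ⌊y n⌋ : ℤ) : ℝ) := by
          conv_lhs => rw [← Int.floor_add_fract (y n)]
          push_cast; ring
        rw [e, ee_add, ee_int, mul_one, ee_re, ← Real.cos_pi_div_three]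
        have hp := Real.pi_pos
        have hle : h * Int.fract (y n) ≤ 1 / 6 := by
          calc h * Int.fract (y n) ≤ H * (1 / (6 * H)) := by gcongr
            _ = 1 / 6 := by field_simp
        apply Real.cos_le_cos_of_nonneg_of_le_pi (by positivity) (by linarith)
        nlinarith
      have := card_nsmul_le_sum _ _ _ this
      rw [card_range, nsmul_eq_mul] at this
      linarith
    have := hre.trans (Complex.re_le_norm _)
    have h2 : 0 ≤ (H:ℝ)/2 := by positivity
    nlinarith
  have expand : ∀ n, ((‖∑ h ∈ range H, ee (h * y n)‖ ^ 2 : ℝ) : ℂ) = ∑ h ∈ range H, ∑ h' ∈ range H, ee (((h:ℤ) - (h':ℤ) : ℤ) * y n) := by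
    intro n
    rw [← Complex.normSq_eq_norm_sq, Complex.normSq_eq_conj_mul_self, mul_comm, map_sum, sum_mul_sum]
    refine sum_congr rfl (fun h _ => sum_congr rfl (fun h' _ => ?_))
    rw [← ee_neg, ← ee_add]; congr 1; push_cast; ring
  have up : ∑ n ∈ s, ‖∑ h ∈ range H, ee (h * y n)‖ ^ 2 ≤ ∑ h ∈ range H, ∑ h' ∈ range H, ‖S ((h:ℤ) - h')‖ := by
    have e : ((∑ n ∈ s, ‖∑ h ∈ range H, ee (h * y n)‖ ^ 2 : ℝ) : ℂ) = ∑ h ∈ range H, ∑ h' ∈ range H, S ((h:ℤ) - h') := by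
      rw [Complex.ofReal_sum, sum_congr rfl (fun n _ => expand n), sum_comm]
      refine sum_congr rfl (fun h _ => ?_)
      rw [sum_comm]
    have e2 : ∑ n ∈ s, ‖∑ h ∈ range H, ee (h * y n)‖ ^ 2 = ‖∑ h ∈ range H, ∑ h' ∈ range H, S ((h:ℤ) - h')‖ := by
      rw [← e, Complex.norm_real, Real.norm_eq_abs, abs_of_nonneg (sum_nonneg (fun n _ => by positivity))]
    rw [e2]
    refine (norm_sum_le _ _).trans (sum_le_sum (fun h _ => norm_sum_le _ _))
  set T := ∑ h ∈ Ico 1 H, ‖∑ n ∈ s, ee (h * y n)‖ with hT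
  have hTS : T = ∑ h ∈ Ico 1 H, ‖S h‖ := by
    rw [hT]; simp only [hS, Int.cast_natCast]
  have row : ∀ h ∈ range H, ∑ h' ∈ range H, ‖S ((h:ℤ) - h')‖ ≤ s.card + 2 * T := by
    intro h hh
    have hh := mem_range.1 hh
    rw [range_eq_Ico, ← sum_Ico_consecutive _ (Nat.zero_le h) hh.le, sum_eq_sum_Ico_succ_bot hh]
    have t0 : ‖S ((h:ℤ) - h)‖ ≤ s.card := by
      simp only [hS, sub_self]
      simp [ee_zero]
    have t1 : ∑ k ∈ Ico 0 h, ‖S ((h:ℤ) - k)‖ ≤ T := by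
      rw [hTS, ← range_eq_Ico, ← sum_range_reflect]
      have : ∑ j ∈ range h, ‖S ((h:ℤ) - ((h - 1 - j : ℕ) : ℤ))‖ = ∑ j ∈ Ico 1 (h+1), ‖S j‖ := by
        rw [sum_Ico_eq_sum_range]
        refine sum_congr (by simp) (fun j hj => ?_)
        have := mem_range.1 hj
        congr 2
        push_cast
        omega
      rw [this]
      exact sum_le_sum_of_subset_of_nonneg (Ico_subset_Ico_right (by omega)) (fun _ _ _ => norm_nonneg _)
    have t2 : ∑ k ∈ Ico (h+1) H, ‖S ((h:ℤ) - k)‖ ≤ T := by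
      have : ∑ k ∈ Ico (h+1) H, ‖S ((h:ℤ) - k)‖ = ∑ j ∈ Ico 1 (H - h), ‖S j‖ := by
        rw [sum_Ico_eq_sum_range, sum_Ico_eq_sum_range]
        refine sum_congr (by congr 1) (fun j hj => ?_)
        rw [← hSneg]
        congr 2
        push_cast
        ring
      rw [this, hTS]
      exact sum_le_sum_of_subset_of_nonneg (Ico_subset_Ico_right (by omega)) (fun _ _ _ => norm_nonneg _)
    linarith
  have tot := up.trans (sum_le_sum row)
  rw [sum_const, card_range, nsmul_eq_mul] at tot
  have l1 : ((s.filter (fun n => Int.fract (y n) < 1 / (6 * H : ℝ))).card : ℝ) * ((H:ℝ) ^ 2 / 4) ≤ ∑ n ∈ s, ‖∑ h ∈ range H, ee (h * y n)‖ ^ 2 := by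
    have := card_nsmul_le_sum _ _ _ low
    rw [nsmul_eq_mul] at this
    refine this.trans (sum_le_sum_of_subset_of_nonneg (filter_subset _ _) (fun _ _ _ => by positivity))
  have l2 := l1.trans tot
  have e : 4 * s.card / H + 8 / H * T = (H * (s.card + 2 * T)) / ((H:ℝ) ^ 2 / 4) := by
    field_simp; ring
  rw [e, le_div_iff₀ (by positivity)]
  exact l2

lemma second_diff (c t : ℝ) (hc : 1 < c) (ht : 0 < t) :
    ∃ η, t < η ∧ η < t + 2 ∧
      ((t + 2) ^ c - (t + 1) ^ c) - ((t + 1) ^ c - t ^ c) = c * (c - 1) * η ^ (c - 2) := by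
  obtain ⟨ξ, ⟨h1, h2⟩, h3⟩ := exists_hasDerivAt_eq_slope (fun u : ℝ => (u + 1) ^ c - u ^ c)
    (fun u => c * (u + 1) ^ (c - 1) - c * u ^ (c - 1)) (a := t) (b := t + 1) (by linarith)
    (by
      apply ContinuousOn.sub
      · exact ContinuousOn.rpow_const (by fun_prop) (fun u _ => Or.inr (by linarith))
      · exact ContinuousOn.rpow_const (by fun_prop) (fun u _ => Or.inr (by linarith)))
    (by
      intro u hu
      have hu0 : 0 < u := ht.trans hu.1
      apply HasDerivAt.sub
      · have := ((hasDerivAt_id u).add_const 1).rpow_const (p := c) (Or.inl (by simp; linarith))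
        simpa using this
      · have := (hasDerivAt_id u).rpow_const (p := c) (Or.inl (by simp; linarith))
        simpa using this)
  have hξ : 0 < ξ := by linarith
  obtain ⟨η, ⟨h4, h5⟩, h6⟩ := exists_hasDerivAt_eq_slope (fun u : ℝ => u ^ (c - 1))
    (fun u => (c - 1) * u ^ (c - 2)) (a := ξ) (b := ξ + 1) (by linarith)
    (ContinuousOn.rpow_const (by fun_prop) (fun u _ => Or.inr (by linarith)))
    (by
      intro u hu
      have hu0 : 0 < u := hξ.trans hu.1
      have := (hasDerivAt_id u).rpow_const (p := c - 1) (Or.inl (by simp; linarith))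
      have e : c - 2 = c - 1 - 1 := by ring
      rw [e]
      simpa using this)
  refine ⟨η, by linarith, by linarith, ?_⟩
  simp only [add_sub_cancel_left, div_one] at h3 h6
  have e : t + 1 + 1 = t + 2 := by ring
  rw [e] at h3
  rw [← h3]
  linear_combination (-c) * h6

lemma rpow_mul_le {x : ℝ} (hx : 1 ≤ x) {p q r : ℝ} (h : p + q ≤ r) : x ^ p * x ^ q ≤ x ^ r := by
  rw [← Real.rpow_add (by linarith)]
  exact Real.rpow_le_rpow_of_exponent_le hx h

lemma exp_sum (c : ℝ) (hc1 : 1 < c) (hc2 : c < 2) : ∃ K : ℝ, 0 < K ∧ ∀ x : ℝ, 1 ≤ x → ∀ a b : ℕ,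
    x ^ (999 / 1000 : ℝ) ≤ a → (b : ℝ) ≤ x + 1 → ∀ h d : ℕ, 1 ≤ h → 1 ≤ d →
    ‖∑ n ∈ Ico a b, ee (h * ((n : ℝ) ^ c / (d : ℝ) ^ 3))‖ ≤
      K * (x ^ (c / 2 + 1 / 1000) * (√(h : ℝ) / √((d : ℝ) ^ 3))
        + x ^ (1 - c / 2) * (√((d : ℝ) ^ 3) / √(h : ℝ))) := by
  set k := √(c * (c - 1) / 3) with hk
  have hcc : 0 < c * (c - 1) / 3 := by
    have : 0 < c - 1 := by linarith
    positivity
  have hk0 : 0 < k := Real.sqrt_pos.2 hcc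
  refine ⟨36 * k + 12 / k, by positivity, ?_⟩
  intro x hx a b ha hb h d hh hd
  have hx0 : 0 < x := by linarith
  have hh0 : (0:ℝ) < h := by exact_mod_cast hh
  have hd0 : (0:ℝ) < d := by exact_mod_cast hd
  set α : ℝ := h / (d:ℝ) ^ 3 with hα
  have hα0 : 0 < α := by positivity
  have ha1 : (1:ℝ) ≤ a := (Real.one_le_rpow hx (by norm_num)).trans ha
  have key := vdc (fun n => h * ((n : ℝ) ^ c / (d : ℝ) ^ 3)) a b (α * (c * (c - 1) / 3) * x ^ (c - 2)) (3 * x ^ (1/1000 : ℝ))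
    (by positivity) (by have := Real.one_le_rpow hx (by norm_num : (0:ℝ) ≤ 1/1000); linarith) ?_ ?_
  rotate_left
  · intro n h1 h2
    have hn : (a:ℝ) ≤ n := by exact_mod_cast h1
    have hn2 : (n:ℝ) + 1 ≤ b := by exact_mod_cast h2
    obtain ⟨η, e1, e2, e3⟩ := second_diff c n hc1 (by linarith)
    push_cast
    have : (h * (((n:ℝ) + 2) ^ c / (d : ℝ) ^ 3) - h * (((n:ℝ) + 1) ^ c / (d : ℝ) ^ 3)) - (h * (((n:ℝ) + 1) ^ c / (d : ℝ) ^ 3) - h * ((n:ℝ) ^ c / (d : ℝ) ^ 3)) = α * (c * (c - 1) * η ^ (c - 2)) := by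
      rw [← e3, hα]; ring
    rw [this]
    have h3 : x ^ (c - 2) ≤ 3 * η ^ (c - 2) := by
      have : (3 * x) ^ (c - 2) ≤ η ^ (c - 2) := Real.rpow_le_rpow_of_nonpos (by linarith) (by linarith) (by linarith)
      rw [Real.mul_rpow (by norm_num) hx0.le] at this
      have h4 : (3:ℝ) ^ (-1 : ℝ) ≤ 3 ^ (c - 2) := Real.rpow_le_rpow_of_exponent_le (by norm_num) (by linarith)
      rw [Real.rpow_neg_one] at h4
      have h5 : 0 < x ^ (c - 2) := by positivity
      nlinarith
    calc α * (c * (c - 1) / 3) * x ^ (c - 2) ≤ α * (c * (c - 1) / 3) * (3 * η ^ (c - 2)) := by gcongr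
      _ = _ := by ring
  · intro n h1 h2
    have hn : (a:ℝ) ≤ n := by exact_mod_cast h1
    obtain ⟨η, e1, e2, e3⟩ := second_diff c n hc1 (by linarith)
    push_cast
    have : (h * (((n:ℝ) + 2) ^ c / (d : ℝ) ^ 3) - h * (((n:ℝ) + 1) ^ c / (d : ℝ) ^ 3)) - (h * (((n:ℝ) + 1) ^ c / (d : ℝ) ^ 3) - h * ((n:ℝ) ^ c / (d : ℝ) ^ 3)) = α * (c * (c - 1) * η ^ (c - 2)) := by
      rw [← e3, hα]; ring
    rw [this]
    have h3 : η ^ (c - 2) ≤ x ^ (1/1000 : ℝ) * x ^ (c - 2) := by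
      have h4 : η ^ (c - 2) ≤ (x ^ (999/1000 : ℝ)) ^ (c - 2) := Real.rpow_le_rpow_of_nonpos (by positivity) (by linarith) (by linarith)
      refine h4.trans ?_
      rw [← Real.rpow_mul hx0.le, ← Real.rpow_add hx0]
      exact Real.rpow_le_rpow_of_exponent_le hx (by linarith)
    calc α * (c * (c - 1) * η ^ (c - 2)) = 3 * (α * (c * (c - 1) / 3) * η ^ (c - 2)) := by ring
      _ ≤ 3 * (α * (c * (c - 1) / 3) * (x ^ (1/1000 : ℝ) * x ^ (c - 2))) := by gcongr
      _ = _ := by ring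
  refine key.trans ?_
  have hba : ((b - a : ℕ) : ℝ) ≤ x := by
    rcases le_total b a with q | q
    · rw [Nat.sub_eq_zero_of_le q]; simpa using hx0.le
    · rw [Nat.cast_sub q]; linarith
  have hs : √(α * (c * (c - 1) / 3) * x ^ (c - 2)) = √α * k * x ^ (c / 2 - 1) := by
    rw [Real.sqrt_mul (by positivity), Real.sqrt_mul (by positivity), Real.sqrt_eq_rpow (x ^ (c - 2)), ← Real.rpow_mul hx0.le]
    congr 2; ring
  rw [hs]
  have hα2 : √α = √(h : ℝ) / √((d : ℝ) ^ 3) := by rw [hα, Real.sqrt_div hh0.le]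
  have hα3 : 1 / √α = √((d : ℝ) ^ 3) / √(h : ℝ) := by rw [hα2, one_div_div]
  rw [← hα2, ← hα3]
  have hsα : 0 < √α := Real.sqrt_pos.2 hα0
  have t1 : ((b - a : ℕ) : ℝ) * (3 * x ^ (1/1000 : ℝ)) * (√α * k * x ^ (c / 2 - 1)) ≤ 3 * k * (x ^ (c / 2 + 1 / 1000) * √α) := by
    calc ((b - a : ℕ) : ℝ) * (3 * x ^ (1/1000 : ℝ)) * (√α * k * x ^ (c / 2 - 1))
        ≤ x * (3 * x ^ (1/1000 : ℝ)) * (√α * k * x ^ (c / 2 - 1)) := by gcongr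
      _ = 3 * k * ((x ^ (1:ℝ) * x ^ (1/1000 : ℝ) * x ^ (c / 2 - 1)) * √α) := by rw [Real.rpow_one]; ring
      _ = _ := by
        rw [← Real.rpow_add hx0, ← Real.rpow_add hx0, show 1 + 1 / 1000 + (c / 2 - 1) = c / 2 + 1 / 1000 by ring]
  have t2 : 1 / (√α * k * x ^ (c / 2 - 1)) = 1 / k * (x ^ (1 - c / 2) * (1 / √α)) := by
    rw [show 1 - c / 2 = -(c / 2 - 1) by ring, Real.rpow_neg hx0.le]; field_simp
  rw [t2]
  have p1 : 0 ≤ x ^ (c / 2 + 1 / 1000) * √α := by positivity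
  have p2 : 0 ≤ x ^ (1 - c / 2) * (1 / √α) := by positivity
  have p3 : 0 < 1 / k := by positivity
  have e : 12 / k = 12 * (1 / k) := by ring
  rw [e]
  have q1 := mul_nonneg p3.le p1
  have q2 := mul_nonneg hk0.le p2
  nlinarith

lemma dvd_floor_iff (z : ℝ) (hz : 0 ≤ z) (q : ℕ) (hq : 1 ≤ q) :
    q ∣ ⌊z⌋₊ ↔ Int.fract (z / q) < 1 / (q : ℝ) := by
  have hq0 : (0:ℝ) < q := by exact_mod_cast hq
  have h1 : Int.fract (z / q) = z / q - (⌊z⌋₊ / q : ℕ) := by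
    rw [← Nat.floor_div_natCast, ← Int.self_sub_floor, ← natCast_floor_eq_intCast_floor (by positivity)]
  rw [h1]
  have h2 : z / q - (⌊z⌋₊ / q : ℕ) < 1 / (q:ℝ) ↔ z < (q * (⌊z⌋₊ / q) : ℕ) + 1 := by
    push_cast
    rw [sub_lt_iff_lt_add, div_lt_iff₀ hq0, add_mul, one_div_mul_cancel hq0.ne']
    constructor <;> intro h <;> linarith
  rw [h2]
  constructor
  · intro h
    rw [Nat.mul_div_cancel' h]
    exact Nat.lt_floor_add_one z
  · intro h
    have h3 : ⌊z⌋₊ < q * (⌊z⌋₊ / q) + 1 := by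
      rw [Nat.floor_lt hz]; exact_mod_cast h
    have h4 := Nat.mul_div_le ⌊z⌋₊ q
    exact ⟨⌊z⌋₊ / q, by omega⟩

/-- The number of `n ∈ [a,b)` with `d ^ 3 ∣ ⌊n ^ c⌋`. -/
noncomputable def Nd (c : ℝ) (a b d : ℕ) : ℕ :=
  ((Ico a b).filter (fun n : ℕ => d ^ 3 ∣ ⌊(n : ℝ) ^ c⌋₊)).card

lemma Nd_eq (c : ℝ) (a b d : ℕ) (hd : 1 ≤ d) :
    Nd c a b d = ((Ico a b).filter (fun n : ℕ => Int.fract ((n : ℝ) ^ c / (d : ℝ) ^ 3) < 1 / ((d ^ 3 : ℕ) : ℝ))).card := by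
  unfold Nd
  congr 1
  apply filter_congr
  intro n _
  rw [dvd_floor_iff _ (by positivity) _ (Nat.one_le_pow _ _ hd)]
  push_cast
  rfl

lemma sqrt_cube_ge_one (d : ℕ) (hd : 1 ≤ d) : 1 ≤ √((d : ℝ) ^ 3) := by
  rw [Real.one_le_sqrt]
  exact one_le_pow₀ (by exact_mod_cast hd)

lemma card_Ico_le {x : ℝ} (hx : 1 ≤ x) (a b : ℕ) (ha : x ^ (999 / 1000 : ℝ) ≤ a) (hb : (b : ℝ) ≤ x + 1) :
    ((Ico a b).card : ℝ) ≤ x := by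
  have ha1 : (1:ℝ) ≤ a := (Real.one_le_rpow hx (by norm_num)).trans ha
  rw [Nat.card_Ico]
  rcases le_total b a with q | q
  · rw [Nat.sub_eq_zero_of_le q]; simp; linarith
  · rw [Nat.cast_sub q]; linarith

lemma small_d (c : ℝ) (hc1 : 1 < c) (hc2 : c < 11 / 6) : ∃ C : ℝ, 0 < C ∧ ∀ x : ℝ, 1 < x → ∀ a b : ℕ,
    x ^ (999 / 1000 : ℝ) ≤ a → (b : ℝ) ≤ x + 1 → ∀ d : ℕ, 1 ≤ d → (d : ℝ) ≤ x ^ (1 / 100 : ℝ) →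
    |(Nd c a b d : ℝ) - (Ico a b).card / (d : ℝ) ^ 3| ≤ C * x ^ (98 / 100 : ℝ) := by
  obtain ⟨K, hK, hexp⟩ := exp_sum c hc1 (by linarith)
  have hZ := Zc_nonneg
  refine ⟨1 + 4 * (Zc * K), by positivity, ?_⟩
  intro x hx a b ha hb d hd hdx
  have hx1 := hx.le
  have hx0 : 0 < x := by linarith
  set Δ : ℝ := x ^ (-(1/50) : ℝ) with hΔ
  have hΔ0 : 0 < Δ := by positivity
  have hΔ1 : Δ < 1 := Real.rpow_lt_one_of_one_lt_of_neg hx (by norm_num)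
  have hd1 := sqrt_cube_ge_one d hd
  have hd2 : √((d : ℝ) ^ 3) ≤ x ^ (3 / 100 : ℝ) := by
    have h1 : (d:ℝ) ^ 3 ≤ x ^ (3 / 100 : ℝ) := by
      calc (d:ℝ) ^ 3 ≤ (x ^ (1 / 100 : ℝ)) ^ 3 := by gcongr
        _ = _ := by rw [← Real.rpow_natCast, ← Real.rpow_mul hx0.le]; norm_num
    have h2 : 1 ≤ (d:ℝ) ^ 3 := one_le_pow₀ (by exact_mod_cast hd)
    refine le_trans ?_ h1
    rw [Real.sqrt_le_left (by positivity)]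
    nlinarith
  have hR : ∀ h : ℕ, 1 ≤ h → ‖∑ n ∈ Ico a b, ee (h * ((n : ℝ) ^ c / (d : ℝ) ^ 3))‖ ≤ (2 * K * x ^ (93 / 100 : ℝ)) * √(h : ℝ) := by
    intro h hh
    refine (hexp x hx1 a b ha hb h d hh hd).trans ?_
    have hs1 : 1 ≤ √(h:ℝ) := by rw [Real.one_le_sqrt]; exact_mod_cast hh
    have q1 : x ^ (c / 2 + 1 / 1000) * (√(h : ℝ) / √((d : ℝ) ^ 3)) ≤ x ^ (93 / 100 : ℝ) * √(h:ℝ) := by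
      gcongr
      · linarith
      · exact div_le_self (by positivity) hd1
    have q2 : x ^ (1 - c / 2) * (√((d : ℝ) ^ 3) / √(h : ℝ)) ≤ x ^ (93 / 100 : ℝ) * √(h:ℝ) := by
      calc x ^ (1 - c / 2) * (√((d : ℝ) ^ 3) / √(h : ℝ)) ≤ x ^ (1 - c / 2) * (x ^ (3/100 : ℝ) / 1) := by gcongr
        _ ≤ x ^ (93 / 100 : ℝ) := by rw [div_one]; exact rpow_mul_le hx1 (by linarith)
        _ ≤ _ := le_mul_of_one_le_right (by positivity) hs1
    calc _ ≤ K * (x ^ (93 / 100 : ℝ) * √(h:ℝ) + x ^ (93 / 100 : ℝ) * √(h:ℝ)) := by gcongr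
      _ = _ := by ring
  have := count_asymp (Ico a b) (fun n => (n : ℝ) ^ c / (d : ℝ) ^ 3) _ hR Δ hΔ0 hΔ1 (d ^ 3) (Nat.one_le_pow _ _ hd)
  rw [← Nd_eq c a b d hd] at this
  push_cast at this
  rw [Nat.card_Ico]
  rw [Nat.card_Ico] at this
  refine this.trans ?_
  have hcard := card_Ico_le hx1 a b ha hb
  rw [Nat.card_Ico] at hcard
  have e1 : ((b - a : ℕ) : ℝ) * Δ ≤ x ^ (98/100 : ℝ) := by
    calc ((b - a : ℕ) : ℝ) * Δ ≤ x ^ (1:ℝ) * Δ := by rw [Real.rpow_one]; gcongr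
      _ ≤ _ := rpow_mul_le hx1 (by norm_num)
  have e2 : x ^ (93 / 100 : ℝ) / Δ ≤ x ^ (98/100 : ℝ) := by
    rw [hΔ, Real.rpow_neg hx0.le, div_inv_eq_mul]
    exact rpow_mul_le hx1 (by norm_num)
  have e3 : 2 * (Zc * (2 * K * x ^ (93 / 100 : ℝ)) / Δ) = 4 * (Zc * K) * (x ^ (93 / 100 : ℝ) / Δ) := by ring
  rw [e3]
  have : 4 * (Zc * K) * (x ^ (93 / 100 : ℝ) / Δ) ≤ 4 * (Zc * K) * x ^ (98/100 : ℝ) := by gcongr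
  linarith

lemma sum_inv_sqrt (H : ℕ) (hH : 1 ≤ H) : ∑ h ∈ Ico 1 H, 1 / √(h : ℝ) ≤ 2 * √(H : ℝ) := by
  have key : ∀ n : ℕ, ∑ h ∈ Ico 1 (n + 1), 1 / √(h : ℝ) ≤ 2 * √(n : ℝ) := by
    intro n
    induction n with
    | zero => simp
    | succ n ih =>
      rw [sum_Ico_succ_top (by omega)]
      have h1 : 0 < √((n + 1 : ℕ) : ℝ) := Real.sqrt_pos.2 (by positivity)
      have s1 := Real.mul_self_sqrt (show (0:ℝ) ≤ n by positivity)
      have s2 := Real.mul_self_sqrt (show (0:ℝ) ≤ ((n + 1 : ℕ) : ℝ) by positivity)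
      have s3 : ((n + 1 : ℕ) : ℝ) = n + 1 := by push_cast; ring
      set s := √(n:ℝ)
      set t := √((n + 1 : ℕ) : ℝ)
      have : 1 / t ≤ 2 * (t - s) := by
        rw [div_le_iff₀ h1]
        nlinarith [sq_nonneg (t - s)]
      linarith
  obtain ⟨n, rfl⟩ : ∃ n, H = n + 1 := ⟨H - 1, by omega⟩
  refine (key n).trans ?_
  gcongr
  omega

set_option maxHeartbeats 1000000 in
lemma mid_d (c : ℝ) (hc1 : 1 < c) (hc2 : c < 11 / 6) : ∃ C : ℝ, 0 < C ∧ ∀ x : ℝ, 1 < x →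
    12 ≤ x ^ (1 / 100 : ℝ) → ∀ a b : ℕ,
    x ^ (999 / 1000 : ℝ) ≤ a → (b : ℝ) ≤ x + 1 → ∀ d : ℕ, 1 ≤ d → x ^ (1 / 100 : ℝ) ≤ d →
    (Nd c a b d : ℝ) ≤ C * (x ^ (99 / 100 : ℝ) * (1 / d) + x ^ (1 - c / 2) * d) := by
  obtain ⟨K, hK, hexp⟩ := exp_sum c hc1 (by linarith)
  refine ⟨4 + 16 * K, by positivity, ?_⟩
  intro x hx hx12 a b ha hb d hd hdx
  have hx1 := hx.le
  have hx0 : 0 < x := by linarith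
  have hd0 : (0:ℝ) < d := by exact_mod_cast hd
  set X : ℝ := x ^ (1 / 100 : ℝ) with hX
  set B : ℕ := ⌈X⌉₊ with hB
  have hB1 : X ≤ B := Nat.le_ceil X
  have hB2 : (B:ℝ) ≤ 2 * X := by
    have := Nat.ceil_lt_add_one (show 0 ≤ X by linarith); linarith
  have hB0 : (1:ℝ) ≤ B := by linarith
  have hB0' : 1 ≤ B := by exact_mod_cast hB0
  set H := d * B with hH
  have hH1 : 1 ≤ H := Nat.one_le_iff_ne_zero.2 (by positivity)
  have hHr : (H:ℝ) = d * B := by rw [hH]; push_cast; ring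
  have hH0 : (0:ℝ) < H := by exact_mod_cast hH1
  have hfj := fejer (Ico a b) (fun n => (n : ℝ) ^ c / (d : ℝ) ^ 3) H hH1
  have hsub : (Nd c a b d : ℝ) ≤ (((Ico a b).filter (fun n : ℕ => Int.fract ((n : ℝ) ^ c / (d : ℝ) ^ 3) < 1 / (6 * H : ℝ))).card : ℝ) := by
    rw [Nd_eq c a b d hd]
    have hle : 1 / ((d ^ 3 : ℕ) : ℝ) ≤ 1 / (6 * H : ℝ) := by
      apply one_div_le_one_div_of_le (by positivity)
      push_cast
      rw [hHr]
      have : 6 * (B:ℝ) ≤ d ^ 2 := by nlinarith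
      nlinarith
    exact_mod_cast card_le_card (monotone_filter_right _ (fun n _ hn => lt_of_lt_of_le hn hle))
  refine hsub.trans (hfj.trans ?_)
  have hcard := card_Ico_le hx1 a b ha hb
  have e1 : 4 * ((Ico a b).card : ℝ) / H ≤ 4 * (x ^ (99 / 100 : ℝ) * (1 / d)) := by
    have h1 : x = x ^ (99/100 : ℝ) * X := by
      rw [hX, ← Real.rpow_add hx0]; norm_num
    rw [div_le_iff₀ hH0, hHr]
    have h2 : 4 * (x ^ (99 / 100 : ℝ) * (1 / d)) * (d * B) = 4 * (x ^ (99/100:ℝ) * B) := by field_simp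
    rw [h2]
    have h3 : x ^ (99/100 : ℝ) * X ≤ x ^ (99/100:ℝ) * B := by gcongr
    linarith
  set D := √((d:ℝ) ^ 3) with hD
  have hD0 : 0 < D := Real.sqrt_pos.2 (by positivity)
  have hsB : 1 ≤ √(B:ℝ) := by rw [Real.one_le_sqrt]; exact hB0
  have hHD : √(H:ℝ) = √(B:ℝ) * D / d := by
    rw [eq_div_iff hd0.ne', hD, hHr, ← Real.sqrt_mul (by positivity)]
    rw [show (B:ℝ)*(d:ℝ)^3 = (d*B)*(d:ℝ)^2 by ring, Real.sqrt_mul (by positivity) ((d:ℝ)^2), Real.sqrt_sq hd0.le]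
  have e2 : ∑ h ∈ Ico 1 H, ‖∑ n ∈ Ico a b, ee (h * ((n : ℝ) ^ c / (d : ℝ) ^ 3))‖
      ≤ K * (x ^ (c / 2 + 1 / 1000) * (H * (√(H:ℝ) / D)) + x ^ (1 - c / 2) * (D * (2 * √(H:ℝ)))) := by
    calc _ ≤ ∑ h ∈ Ico 1 H, (K * x ^ (c / 2 + 1 / 1000) * (√(H:ℝ) / D) + K * (x ^ (1 - c / 2) * D) * (1 / √(h:ℝ))) := by
          apply sum_le_sum
          intro h hh
          rw [mem_Ico] at hh
          refine (hexp x hx1 a b ha hb h d hh.1 hd).trans ?_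
          have hle : √(h:ℝ) ≤ √(H:ℝ) := by gcongr; exact hh.2.le
          have : x ^ (c / 2 + 1 / 1000) * (√(h:ℝ) / D) ≤ x ^ (c / 2 + 1 / 1000) * (√(H:ℝ) / D) := by gcongr
          have h2 := mul_le_mul_of_nonneg_left this hK.le
          calc _ = K * (x ^ (c / 2 + 1 / 1000) * (√(h:ℝ) / D)) + K * (x ^ (1 - c / 2) * D) * (1 / √(h:ℝ)) := by ring
            _ ≤ _ := by linarith
      _ ≤ _ := by
          rw [sum_add_distrib, sum_const, nsmul_eq_mul, ← mul_sum, Nat.card_Ico]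
          have h1 := sum_inv_sqrt H hH1
          have h2 : ((H - 1 : ℕ) : ℝ) ≤ H := by exact_mod_cast Nat.sub_le _ _
          have h3 : ((H - 1 : ℕ) : ℝ) * (K * x ^ (c / 2 + 1 / 1000) * (√(H:ℝ) / D)) ≤ H * (K * x ^ (c / 2 + 1 / 1000) * (√(H:ℝ) / D)) := by gcongr
          have h4 : K * (x ^ (1 - c / 2) * D) * ∑ h ∈ Ico 1 H, 1 / √(h : ℝ) ≤ K * (x ^ (1 - c / 2) * D) * (2 * √(H:ℝ)) := by gcongr
          calc _ ≤ H * (K * x ^ (c / 2 + 1 / 1000) * (√(H:ℝ) / D)) + K * (x ^ (1 - c / 2) * D) * (2 * √(H:ℝ)) := add_le_add h3 h4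
            _ = _ := by ring
  have e3 : 8 / H * (K * (x ^ (c / 2 + 1 / 1000) * (H * (√(H:ℝ) / D)) + x ^ (1 - c / 2) * (D * (2 * √(H:ℝ)))))
      = 8 * K * (x ^ (c / 2 + 1 / 1000) * (√(H:ℝ) / D)) + 16 * K * (x ^ (1 - c / 2) * (D / √(H:ℝ))) := by
    have hs0 : 0 < √(H:ℝ) := Real.sqrt_pos.2 hH0
    have hs2 : (H:ℝ) = √(H:ℝ) ^ 2 := (Real.sq_sqrt hH0.le).symm
    set t := √(H:ℝ)
    rw [hs2]
    field_simp
    ring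
  have e4 : √(H:ℝ) / D = √(B:ℝ) / d := by rw [hHD]; field_simp
  have e5 : D / √(H:ℝ) ≤ d := by
    rw [hHD, div_le_iff₀ (by positivity)]
    rw [mul_div_cancel₀ _ hd0.ne']
    nlinarith
  have e6 : x ^ (c / 2 + 1 / 1000) * (√(B:ℝ) / d) ≤ 2 * (x ^ (99/100 : ℝ) * (1 / d)) := by
    have h1 : √(B:ℝ) ≤ 2 * X := by
      refine le_trans ?_ hB2
      rw [Real.sqrt_le_left (by positivity)]; nlinarith
    calc x ^ (c / 2 + 1 / 1000) * (√(B:ℝ) / d) ≤ x ^ (c / 2 + 1 / 1000) * ((2 * X) / d) := by gcongr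
      _ = 2 * ((x ^ (c / 2 + 1 / 1000) * X) * (1 / d)) := by ring
      _ ≤ _ := by
        gcongr
        exact rpow_mul_le hx1 (by linarith)
  have e7 : 8 / H * ∑ h ∈ Ico 1 H, ‖∑ n ∈ Ico a b, ee (h * ((n : ℝ) ^ c / (d : ℝ) ^ 3))‖
     ≤ 8 * K * (2 * (x ^ (99/100 : ℝ) * (1 / d))) + 16 * K * (x ^ (1 - c / 2) * d) := by
    refine (mul_le_mul_of_nonneg_left e2 (by positivity)).trans ?_
    rw [e3, e4]
    gcongr
  have p : 0 ≤ x ^ (1 - c / 2) * d := by positivity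
  refine (add_le_add e1 e7).trans ?_
  generalize x ^ (99/100 : ℝ) * (1 / (d:ℝ)) = P
  generalize x ^ (1 - c / 2) * (d:ℝ) = Q at p ⊢
  linarith

lemma floor_rpow_strictMono (c : ℝ) (hc1 : 1 < c) {n m : ℕ} (hn : 1 ≤ n) (h : n < m) :
    ⌊(n:ℝ) ^ c⌋₊ < ⌊(m:ℝ) ^ c⌋₊ := by
  have hn1 : (1:ℝ) ≤ n := by exact_mod_cast hn
  have hm : (n:ℝ) + 1 ≤ m := by exact_mod_cast h
  have h1 : (n:ℝ) ^ c + 1 ≤ (m:ℝ) ^ c := by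
    have e : c = 1 + (c - 1) := by ring
    have a1 : (n:ℝ) ^ c = n * (n:ℝ) ^ (c - 1) := by
      conv_lhs => rw [e]
      rw [Real.rpow_add (by linarith), Real.rpow_one]
    have a2 : (m:ℝ) ^ c = m * (m:ℝ) ^ (c - 1) := by
      conv_lhs => rw [e]
      rw [Real.rpow_add (by linarith), Real.rpow_one]
    have a3 : (n:ℝ) ^ (c - 1) ≤ (m:ℝ) ^ (c - 1) := Real.rpow_le_rpow (by linarith) (by linarith) (by linarith)
    have a4 : 1 ≤ (n:ℝ) ^ (c - 1) := Real.one_le_rpow hn1 (by linarith)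
    rw [a1, a2]
    nlinarith
  have h2 := Nat.floor_le_floor h1
  rw [Nat.floor_add_one (by positivity)] at h2
  omega

lemma large_d (c : ℝ) (hc1 : 1 < c) (x : ℝ) (hx : 1 ≤ x) (a b : ℕ) (ha : 1 ≤ a) (hb : (b : ℝ) ≤ x + 1)
    (d : ℕ) (hd : 1 ≤ d) : (Nd c a b d : ℝ) ≤ x ^ c * (1 / (d : ℝ) ^ 3) := by
  have hd0 : (0:ℝ) < (d:ℝ) ^ 3 := by positivity
  have : Nd c a b d ≤ (Icc 1 ⌊x ^ c / (d:ℝ) ^ 3⌋₊).card := by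
    unfold Nd
    apply card_le_card_of_injOn (fun n : ℕ => ⌊(n : ℝ) ^ c⌋₊ / d ^ 3)
    · intro n hn
      simp only [coe_filter, Set.mem_ofPred_eq, mem_Ico] at hn
      simp only [coe_Icc, Set.mem_Icc]
      have hn1 : (1:ℝ) ≤ n := by exact_mod_cast ha.trans hn.1.1
      have hnx : (n:ℝ) ≤ x := by
        have : (n:ℝ) + 1 ≤ b := by exact_mod_cast hn.1.2
        linarith
      have h1 : 1 ≤ ⌊(n : ℝ) ^ c⌋₊ := by
        rw [Nat.one_le_floor_iff]; exact Real.one_le_rpow hn1 (by linarith)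
      constructor
      · exact Nat.div_pos (Nat.le_of_dvd h1 hn.2) (by positivity)
      · rw [← Nat.floor_div_natCast]
        apply Nat.floor_le_floor
        push_cast
        gcongr
    · intro n hn m hm hnm
      simp only [coe_filter, Set.mem_ofPred_eq, mem_Ico] at hn hm
      simp only at hnm
      have heq : ⌊(n : ℝ) ^ c⌋₊ = ⌊(m : ℝ) ^ c⌋₊ := by
        rw [← Nat.div_mul_cancel hn.2, ← Nat.div_mul_cancel hm.2, hnm]
      rcases lt_trichotomy n m with h | h | h
      · have := floor_rpow_strictMono c hc1 (ha.trans hn.1.1) h; omega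
      · exact h
      · have := floor_rpow_strictMono c hc1 (ha.trans hm.1.1) h; omega
  rw [Nat.card_Icc, Nat.add_sub_cancel] at this
  calc (Nd c a b d : ℝ) ≤ (⌊x ^ c / (d:ℝ) ^ 3⌋₊ : ℝ) := by exact_mod_cast this
    _ ≤ x ^ c / (d:ℝ) ^ 3 := Nat.floor_le (by positivity)
    _ = _ := by ring

noncomputable def mu (d : ℕ) : ℝ := ((ArithmeticFunction.moebius d : ℤ) : ℝ)

lemma mu_abs (d : ℕ) : |mu d| ≤ 1 := by
  unfold mu
  have := @ArithmeticFunction.abs_moebius_le_one d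
  exact_mod_cast this

lemma tail_sum (m M : ℕ) (hm : 1 ≤ m) : ∑ d ∈ Ioc m M, 1 / (d : ℝ) ^ 3 ≤ 1 / (m : ℝ) ^ 2 := by
  have key : ∀ k : ℕ, ∑ d ∈ Ioc m (m + k), 1 / (d : ℝ) ^ 3 ≤ 1 / (m : ℝ) ^ 2 - 1 / ((m + k : ℕ) : ℝ) ^ 2 := by
    intro k
    induction k with
    | zero => simp
    | succ k ih =>
      rw [← Nat.add_assoc, sum_Ioc_succ_top (by omega)]
      have h : 1 / ((m + k + 1 : ℕ) : ℝ) ^ 3 ≤ 1 / ((m + k : ℕ) : ℝ) ^ 2 - 1 / ((m + k + 1 : ℕ) : ℝ) ^ 2 := by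
        have h0 : (1:ℝ) ≤ ((m + k : ℕ) : ℝ) := by exact_mod_cast (by omega)
        rw [Nat.cast_add_one]
        set t := ((m + k : ℕ) : ℝ)
        rw [div_sub_div _ _ (by positivity) (by positivity), div_le_div_iff₀ (by positivity) (by positivity)]
        have : 0 ≤ t ^ 2 * (t+1)^2 := by positivity
        nlinarith [mul_nonneg (sq_nonneg (t+1)) (show 0 ≤ t by linarith), mul_nonneg this (show 0 ≤ t by linarith), mul_nonneg (sq_nonneg (t+1)) (mul_nonneg (show 0 ≤ t by linarith) (show 0 ≤ t by linarith))]
      linarith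
  rcases le_total m M with h | h
  · obtain ⟨k, rfl⟩ := Nat.exists_eq_add_of_le h
    have := key k
    have h2 : 0 ≤ 1 / ((m + k : ℕ) : ℝ) ^ 2 := by positivity
    linarith
  · rw [Ioc_eq_empty (by omega)]; simp

lemma cubeFree_iff (m : ℕ) (hm : 1 ≤ m) : CubeFree m ↔ Nat.floorRoot 3 m = 1 := by
  have h0 : Nat.floorRoot 3 m ≠ 0 := Nat.floorRoot_ne_zero.2 ⟨by norm_num, by omega⟩
  unfold CubeFree
  constructor
  · intro h
    by_contra hne
    obtain ⟨p, hp, hd⟩ := Nat.exists_prime_and_dvd hne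
    exact h p hp ((Nat.pow_dvd_iff_dvd_floorRoot).2 hd)
  · intro h p hp hd
    rw [Nat.pow_dvd_iff_dvd_floorRoot, h] at hd
    exact hp.one_lt.ne' (Nat.dvd_one.1 hd)

lemma moebius_id (m M : ℕ) (hm : 1 ≤ m) (hM : m ≤ M) :
    (if CubeFree m then (1:ℝ) else 0) = ∑ d ∈ Icc 1 M, if d ^ 3 ∣ m then mu d else 0 := by
  have h0 : Nat.floorRoot 3 m ≠ 0 := Nat.floorRoot_ne_zero.2 ⟨by norm_num, by omega⟩
  rw [← sum_filter]
  have hs : (Icc 1 M).filter (fun d => d ^ 3 ∣ m) = (Nat.floorRoot 3 m).divisors := by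
    ext d
    simp only [mem_filter, mem_Icc, Nat.mem_divisors, Nat.pow_dvd_iff_dvd_floorRoot]
    constructor
    · rintro ⟨_, h⟩; exact ⟨h, h0⟩
    · rintro ⟨h, _⟩
      refine ⟨⟨Nat.pos_of_dvd_of_pos h (by omega), ?_⟩, h⟩
      have h2 := Nat.le_of_dvd hm (Nat.pow_dvd_iff_dvd_floorRoot.2 h)
      exact (Nat.le_self_pow (by norm_num) d).trans (h2.trans hM)
  have hs' : ∑ d ∈ (Icc 1 M).filter (fun d => d ^ 3 ∣ m), mu d = ∑ d ∈ (Nat.floorRoot 3 m).divisors, mu d := by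
    rw [← hs]
  rw [hs']
  have := @ArithmeticFunction.coe_mul_zeta_apply ℤ _ ArithmeticFunction.moebius (Nat.floorRoot 3 m)
  rw [ArithmeticFunction.moebius_mul_coe_zeta] at this
  unfold mu
  rw [← Int.cast_sum, ← this, ArithmeticFunction.one_apply]
  rw [cubeFree_iff m hm]
  split_ifs <;> simp

lemma zeta3_mul : Summable (fun d : ℕ => mu d * (1 / (d:ℝ) ^ 3)) ∧ zeta3 * ∑' d : ℕ, mu d * (1 / (d:ℝ) ^ 3) = 1 := by
  have hsum : Summable (fun n : ℕ => 1 / (n : ℝ) ^ 3) := Real.summable_one_div_nat_pow.2 (by norm_num)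
  have hs2 : Summable (fun d : ℕ => mu d * (1 / (d:ℝ) ^ 3)) := by
    apply Summable.of_norm_bounded hsum
    intro d
    rw [norm_mul, Real.norm_eq_abs, Real.norm_eq_abs, abs_of_nonneg (by positivity : (0:ℝ) ≤ 1 / (d:ℝ)^3)]
    exact mul_le_of_le_one_left (by positivity) (mu_abs d)
  refine ⟨hs2, ?_⟩
  have hs : (1:ℝ) < (3:ℂ).re := by norm_num
  have h1 := ArithmeticFunction.LSeries_zeta_mul_Lseries_moebius hs
  rw [ArithmeticFunction.LSeries_zeta_eq_riemannZeta hs] at h1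
  have h2 := @zeta_nat_eq_tsum_of_gt_one 3 (by norm_num)
  have h3 : riemannZeta (3:ℂ) = (zeta3 : ℂ) := by
    have : ((3:ℕ):ℂ) = 3 := by norm_num
    rw [← this, h2]
    unfold zeta3
    push_cast
    rfl
  have h4 : LSeries (fun n => ((ArithmeticFunction.moebius n : ℤ) : ℂ)) 3 = ((∑' d : ℕ, mu d * (1 / (d:ℝ) ^ 3) : ℝ) : ℂ) := by
    unfold LSeries
    rw [Complex.ofReal_tsum]
    apply tsum_congr
    intro n
    rcases eq_or_ne n 0 with rfl | hn
    · simp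
    · rw [LSeries.term_of_ne_zero hn]
      unfold mu
      push_cast
      rw [div_eq_mul_one_div]
      congr 2
      exact_mod_cast Complex.cpow_natCast (n:ℂ) 3
  rw [h3, h4] at h1
  exact_mod_cast h1

lemma zeta3_ge : 1 ≤ zeta3 := by
  have hsum : Summable (fun n : ℕ => 1 / (n : ℝ) ^ 3) := Real.summable_one_div_nat_pow.2 (by norm_num)
  have := hsum.le_tsum 1 (fun j _ => by positivity)
  unfold zeta3
  simpa using this

lemma mu_sum_approx (m : ℕ) (hm : 1 ≤ m) :
    |∑ d ∈ Icc 1 m, mu d * (1 / (d:ℝ) ^ 3) - 1 / zeta3| ≤ 1 / (m:ℝ) ^ 2 := by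
  obtain ⟨hs, hz⟩ := zeta3_mul
  have hz0 : zeta3 ≠ 0 := by have := zeta3_ge; positivity
  have h1 : 1 / zeta3 = ∑' d : ℕ, mu d * (1 / (d:ℝ) ^ 3) := by
    rw [div_eq_iff hz0]; linarith
  have ht : Tendsto (fun M : ℕ => ∑ d ∈ range (M+1), mu d * (1 / (d:ℝ) ^ 3)) atTop (nhds (1 / zeta3)) := by
    rw [h1]; exact hs.hasSum.tendsto_sum_nat.comp (tendsto_add_atTop_nat 1)
  have ht2 := ((tendsto_const_nhds (x := ∑ d ∈ Icc 1 m, mu d * (1 / (d:ℝ) ^ 3))).sub ht).abs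
  refine le_of_tendsto ht2 ?_
  filter_upwards [eventually_ge_atTop m] with M hM
  have e : ∑ d ∈ range (M+1), mu d * (1 / (d:ℝ) ^ 3) = ∑ d ∈ Icc 1 m, mu d * (1 / (d:ℝ) ^ 3) + ∑ d ∈ Ioc m M, mu d * (1 / (d:ℝ) ^ 3) := by
    rw [← sum_union]
    · symm
      apply sum_subset
      · intro d; simp only [mem_union, mem_Icc, mem_Ioc, mem_range]; omega
      · intro d h1 h2
        simp only [mem_union, mem_Icc, mem_Ioc, mem_range] at h1 h2
        have : d = 0 := by omega
        subst this; simp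
    · rw [disjoint_left]; intro d; simp only [mem_Icc, mem_Ioc]; omega
  rw [e, sub_add_cancel_left, abs_neg]
  refine (abs_sum_le_sum_abs _ _).trans ((sum_le_sum ?_).trans (tail_sum m M hm))
  intro d _
  rw [abs_mul, abs_of_nonneg (by positivity : (0:ℝ) ≤ 1 / (d:ℝ)^3)]
  exact mul_le_of_le_one_left (by positivity) (mu_abs d)

lemma harm_le (m : ℕ) (x : ℝ) (hx : 1 ≤ x) (hm : (m:ℝ) ≤ x) :
    ∑ d ∈ Icc 1 m, 1 / (d:ℝ) ≤ 1001 * x ^ (1 / 1000 : ℝ) := by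
  have h := harmonic_le_one_add_log m
  rw [harmonic_eq_sum_Icc] at h
  push_cast at h
  simp only [one_div]
  refine h.trans ?_
  have h1 : 1 ≤ x ^ (1000:ℝ)⁻¹ := Real.one_le_rpow hx (by norm_num)
  have h2 : Real.log m ≤ Real.log x := by
    rcases Nat.eq_zero_or_pos m with rfl | h0
    · simpa using Real.log_nonneg hx
    · exact Real.log_le_log (by exact_mod_cast h0) hm
  have h3 := Real.log_le_rpow_div (show 0 ≤ x by linarith) (show (0:ℝ) < (1000:ℝ)⁻¹ by norm_num)
  have h4 : x ^ (1000:ℝ)⁻¹ / (1000:ℝ)⁻¹ = 1000 * x ^ (1000:ℝ)⁻¹ := by rw [div_inv_eq_mul]; ring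
  linarith

lemma core (c : ℝ) (hc1 : 1 < c) (hc2 : c < 11 / 6) : ∃ C : ℝ, 0 < C ∧ ∀ x : ℝ, 1 < x →
    12 ≤ x ^ (1 / 100 : ℝ) → ∀ a b M : ℕ,
    x ^ (999 / 1000 : ℝ) ≤ a → (b : ℝ) ≤ x + 1 → x ≤ M →
    |∑ d ∈ Icc 1 M, mu d * (Nd c a b d : ℝ) - ((Ico a b).card : ℝ) * (1 / zeta3)| ≤ C * x ^ (999 / 1000 : ℝ) := by
  obtain ⟨C1, hC1, hsmall⟩ := small_d c hc1 hc2
  obtain ⟨C2, hC2, hmid⟩ := mid_d c hc1 hc2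
  refine ⟨C1 + C2 * 1002 + 4 + 4, by positivity, ?_⟩
  intro x hx hx12 a b M ha hb hM
  have hx1 := hx.le
  have hx0 : 0 < x := by linarith
  have ha1 : 1 ≤ a := by
    have : (1:ℝ) ≤ x ^ (999 / 1000 : ℝ) := Real.one_le_rpow hx1 (by norm_num)
    exact_mod_cast this.trans ha
  set X : ℝ := x ^ (1 / 100 : ℝ) with hX
  set Y : ℝ := x ^ (c / 4 - 1 / 100) with hY
  have hXY : X ≤ Y := Real.rpow_le_rpow_of_exponent_le hx1 (by linarith)
  have hYx : Y ≤ x := by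
    calc Y ≤ x ^ (1:ℝ) := Real.rpow_le_rpow_of_exponent_le hx1 (by linarith)
      _ = x := Real.rpow_one x
  have hX0 : 0 ≤ X := by linarith
  have hY0 : 0 ≤ Y := by linarith
  set m0 : ℕ := ⌊X⌋₊ with hm0
  set m1 : ℕ := ⌊Y⌋₊ with hm1
  have a1 : (m0:ℝ) ≤ X := Nat.floor_le hX0
  have a2 : X < m0 + 1 := Nat.lt_floor_add_one X
  have a3 : (m1:ℝ) ≤ Y := Nat.floor_le hY0
  have a4 : Y < m1 + 1 := Nat.lt_floor_add_one Y
  have a5 : m0 ≤ m1 := Nat.floor_le_floor hXY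
  have a6 : m1 ≤ M := by exact_mod_cast (a3.trans (hYx.trans hM))
  have a7 : 1 ≤ m0 := by
    have : (1:ℝ) ≤ m0 := by linarith
    exact_mod_cast this
  have b0 : X / 2 ≤ m0 := by linarith
  have b1 : Y / 2 ≤ m1 := by linarith
  set Z : ℝ := x ^ (999 / 1000 : ℝ) with hZ
  set N : ℝ := ((Ico a b).card : ℝ) with hN
  have hNx : N ≤ x := card_Ico_le hx1 a b ha hb
  have hN0 : 0 ≤ N := by positivity
  have s1 : ∑ d ∈ Icc 1 m0, |(Nd c a b d : ℝ) - N / (d:ℝ) ^ 3| ≤ C1 * Z := by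
    calc _ ≤ ∑ d ∈ Icc 1 m0, C1 * x ^ (98 / 100 : ℝ) := by
          apply sum_le_sum
          intro d hd
          rw [mem_Icc] at hd
          exact hsmall x hx a b ha hb d hd.1 (le_trans (by exact_mod_cast hd.2) a1)
      _ = C1 * ((m0:ℝ) * x ^ (98 / 100 : ℝ)) := by
          rw [sum_const, nsmul_eq_mul, Nat.card_Icc, Nat.add_sub_cancel]; ring
      _ ≤ C1 * (X * x ^ (98 / 100 : ℝ)) := by gcongr
      _ ≤ C1 * Z := by
          gcongr
          exact rpow_mul_le hx1 (by norm_num)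
  have s2 : ∑ d ∈ Ioc m0 m1, (Nd c a b d : ℝ) ≤ C2 * 1002 * Z := by
    have h1 : ∑ d ∈ Ioc m0 m1, (1 / (d:ℝ)) ≤ 1001 * x ^ (1 / 1000 : ℝ) := by
      refine le_trans (sum_le_sum_of_subset_of_nonneg ?_ ?_) (harm_le m1 x hx1 (a3.trans hYx))
      · intro d; simp only [mem_Ioc, mem_Icc]; omega
      · intro d _ _; positivity
    have h2 : ∑ d ∈ Ioc m0 m1, (d:ℝ) ≤ Y * Y := by
      calc _ ≤ ∑ d ∈ Ioc m0 m1, Y := by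
            apply sum_le_sum
            intro d hd
            rw [mem_Ioc] at hd
            exact le_trans (by exact_mod_cast hd.2) a3
        _ = ((m1 - m0 : ℕ) : ℝ) * Y := by rw [sum_const, nsmul_eq_mul, Nat.card_Ioc]
        _ ≤ Y * Y := by
            gcongr
            exact le_trans (by exact_mod_cast Nat.sub_le _ _) a3
    calc _ ≤ ∑ d ∈ Ioc m0 m1, C2 * (x ^ (99 / 100 : ℝ) * (1 / d) + x ^ (1 - c / 2) * d) := by
          apply sum_le_sum
          intro d hd
          rw [mem_Ioc] at hd
          have : (m0:ℝ) + 1 ≤ d := by exact_mod_cast hd.1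
          exact hmid x hx hx12 a b ha hb d (by omega) (by linarith)
      _ = C2 * (x ^ (99 / 100 : ℝ) * ∑ d ∈ Ioc m0 m1, (1 / (d:ℝ)) + x ^ (1 - c / 2) * ∑ d ∈ Ioc m0 m1, (d:ℝ)) := by
          rw [← mul_sum, sum_add_distrib, ← mul_sum, ← mul_sum]
      _ ≤ C2 * (x ^ (99 / 100 : ℝ) * (1001 * x ^ (1 / 1000 : ℝ)) + x ^ (1 - c / 2) * (Y * Y)) := by gcongr
      _ = C2 * (1001 * (x ^ (99 / 100 : ℝ) * x ^ (1 / 1000 : ℝ)) + x ^ (1 - c / 2) * (Y * Y)) := by ring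
      _ ≤ C2 * (1001 * Z + Z) := by
          gcongr
          · exact rpow_mul_le hx1 (by norm_num)
          · rw [hY, ← Real.rpow_add hx0]
            exact rpow_mul_le hx1 (by linarith)
      _ = _ := by ring
  have hm0p : (0:ℝ) < m0 := by exact_mod_cast a7
  have hm1p : (0:ℝ) < m1 := by exact_mod_cast (a7.trans a5)
  have hXp : 0 < X := by linarith
  have hYp : 0 < Y := by linarith
  have s3 : ∑ d ∈ Ioc m1 M, (Nd c a b d : ℝ) ≤ 4 * Z := by
    calc _ ≤ ∑ d ∈ Ioc m1 M, x ^ c * (1 / (d:ℝ) ^ 3) := by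
          apply sum_le_sum
          intro d hd
          rw [mem_Ioc] at hd
          exact large_d c hc1 x hx1 a b ha1 hb d (by omega)
      _ ≤ x ^ c * (1 / (m1:ℝ) ^ 2) := by
          rw [← mul_sum]
          gcongr
          exact tail_sum m1 M (a7.trans a5)
      _ ≤ x ^ c * (1 / (Y / 2) ^ 2) := by gcongr
      _ = 4 * (x ^ c * x ^ (-(c / 2 - 1 / 50))) := by
          have : x ^ (c / 2 - 1 / 50) = Y ^ 2 := by
            rw [hY, sq, ← Real.rpow_add hx0]; congr 1; ring
          rw [Real.rpow_neg hx0.le, this]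
          field_simp
          norm_num
      _ ≤ 4 * Z := by
          gcongr
          exact rpow_mul_le hx1 (by linarith)
  have s4 : N * |∑ d ∈ Icc 1 m0, mu d * (1 / (d:ℝ) ^ 3) - 1 / zeta3| ≤ 4 * Z := by
    calc _ ≤ x * (1 / (m0:ℝ) ^ 2) := by
          gcongr
          exact mu_sum_approx m0 a7
      _ ≤ x * (1 / (X / 2) ^ 2) := by gcongr
      _ = 4 * (x ^ (1:ℝ) * x ^ (-(1 / 50 : ℝ))) := by
          have : x ^ (1 / 50 : ℝ) = X ^ 2 := by
            rw [hX, sq, ← Real.rpow_add hx0]; congr 1; norm_num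
          rw [Real.rpow_neg hx0.le, this, Real.rpow_one]
          field_simp
          norm_num
      _ ≤ 4 * Z := by
          gcongr
          exact rpow_mul_le hx1 (by norm_num)
  have hsplit : ∑ d ∈ Icc 1 M, mu d * (Nd c a b d : ℝ) = ∑ d ∈ Icc 1 m0, mu d * (Nd c a b d : ℝ)
      + (∑ d ∈ Ioc m0 m1, mu d * (Nd c a b d : ℝ) + ∑ d ∈ Ioc m1 M, mu d * (Nd c a b d : ℝ)) := by
    rw [← sum_union, ← sum_union]
    · apply sum_congr _ (fun _ _ => rfl)
      ext d; simp only [mem_union, mem_Icc, mem_Ioc]; omega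
    · rw [disjoint_left]; intro d; simp only [mem_union, mem_Icc, mem_Ioc]; omega
    · rw [disjoint_left]; intro d; simp only [mem_Ioc]; omega
  have hmain : ∑ d ∈ Icc 1 m0, mu d * (Nd c a b d : ℝ) = ∑ d ∈ Icc 1 m0, mu d * ((Nd c a b d : ℝ) - N / (d:ℝ) ^ 3)
      + N * ∑ d ∈ Icc 1 m0, mu d * (1 / (d:ℝ) ^ 3) := by
    rw [mul_sum, ← sum_add_distrib]
    apply sum_congr rfl
    intro d _
    ring
  have hmu : ∀ (s : Finset ℕ) (f : ℕ → ℝ), |∑ d ∈ s, mu d * f d| ≤ ∑ d ∈ s, |f d| := by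
    intro s f
    refine (abs_sum_le_sum_abs _ _).trans (sum_le_sum fun d _ => ?_)
    rw [abs_mul]
    exact mul_le_of_le_one_left (abs_nonneg _) (mu_abs d)
  have t1 := (hmu (Icc 1 m0) (fun d => (Nd c a b d : ℝ) - N / (d:ℝ) ^ 3)).trans s1
  have t2 : |∑ d ∈ Ioc m0 m1, mu d * (Nd c a b d : ℝ)| ≤ C2 * 1002 * Z := by
    refine (hmu _ _).trans (le_trans (le_of_eq ?_) s2)
    exact sum_congr rfl (fun d _ => abs_of_nonneg (Nat.cast_nonneg _))
  have t3 : |∑ d ∈ Ioc m1 M, mu d * (Nd c a b d : ℝ)| ≤ 4 * Z := by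
    refine (hmu _ _).trans (le_trans (le_of_eq ?_) s3)
    exact sum_congr rfl (fun d _ => abs_of_nonneg (Nat.cast_nonneg _))
  have t4 : |N * (∑ d ∈ Icc 1 m0, mu d * (1 / (d:ℝ) ^ 3) - 1 / zeta3)| ≤ 4 * Z := by
    rw [abs_mul, abs_of_nonneg hN0]; exact s4
  rw [hsplit, hmain]
  set S1 := ∑ d ∈ Icc 1 m0, mu d * ((Nd c a b d : ℝ) - N / (d:ℝ) ^ 3)
  set S2 := ∑ d ∈ Ioc m0 m1, mu d * (Nd c a b d : ℝ)
  set S3 := ∑ d ∈ Ioc m1 M, mu d * (Nd c a b d : ℝ)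
  set S4 := ∑ d ∈ Icc 1 m0, mu d * (1 / (d:ℝ) ^ 3)
  rw [mul_sub] at t4
  rw [abs_le] at t1 t2 t3 t4 ⊢
  constructor
  · linarith [t1.1, t2.1, t3.1, t4.1]
  · linarith [t1.2, t2.2, t3.2, t4.2]

theorem cubefree_floor_count_nat (c ε : ℝ) (hc1 : 1 < c) (hc2 : c < 11 / 6)
    (hε1 : 0 < ε) (hε2 : ε < 1 / 10 ^ 10) :
    (fun x : ℝ =>
        (((Finset.Icc 1 ⌊x⌋₊).filter (fun n => CubeFree ⌊(n : ℝ) ^ c⌋₊)).card : ℝ)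
          - x / zeta3)
      =O[atTop] fun x : ℝ => x ^ (1 - ε) := by
  obtain ⟨C, hC, hcore⟩ := core c hc1 hc2
  apply IsBigO.of_bound (C + 4)
  have ev := (tendsto_rpow_atTop (show (0:ℝ) < 1 / 100 by norm_num)).eventually_ge_atTop 12
  filter_upwards [ev, eventually_gt_atTop 1] with x hx12 hx
  have hx1 := hx.le
  have hx0 : 0 < x := by linarith
  set Z : ℝ := x ^ (999 / 1000 : ℝ) with hZ
  have hZ1 : 1 ≤ Z := Real.one_le_rpow hx1 (by norm_num)
  have hZx : Z ≤ x := by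
    calc Z ≤ x ^ (1:ℝ) := Real.rpow_le_rpow_of_exponent_le hx1 (by norm_num)
      _ = x := Real.rpow_one x
  have hZe : Z ≤ x ^ (1 - ε) := by
    apply Real.rpow_le_rpow_of_exponent_le hx1
    have : (1:ℝ) / 10 ^ 10 ≤ 1 / 1000 := by norm_num
    linarith
  set a : ℕ := ⌈Z⌉₊ with ha
  set b : ℕ := ⌊x⌋₊ + 1 with hb
  have ha1 : Z ≤ a := Nat.le_ceil Z
  have ha2 : (a:ℝ) < Z + 1 := Nat.ceil_lt_add_one (by linarith)
  have ha3 : 1 ≤ a := by exact_mod_cast hZ1.trans ha1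
  have hfl : (⌊x⌋₊ : ℝ) ≤ x := Nat.floor_le hx0.le
  have hfl2 : x < (⌊x⌋₊ : ℝ) + 1 := Nat.lt_floor_add_one x
  have hbx : (b:ℝ) ≤ x + 1 := by rw [hb]; push_cast; linarith
  have hbx2 : x < (b:ℝ) := by rw [hb]; push_cast; linarith
  have hab : a ≤ b := by
    apply Nat.ceil_le.2
    linarith
  set M : ℕ := ⌈x⌉₊ + ⌊x ^ c⌋₊ with hM
  have hMx : x ≤ M := by
    rw [hM]; push_cast
    have := Nat.le_ceil x
    have h2 : (0:ℝ) ≤ (⌊x ^ c⌋₊ : ℝ) := by positivity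
    linarith
  have hcr := hcore x hx hx12 a b M ha1 hbx hMx
  have hcount : (((Finset.Icc 1 ⌊x⌋₊).filter (fun n => CubeFree ⌊(n : ℝ) ^ c⌋₊)).card : ℝ)
      = ∑ n ∈ Ico 1 a, (if CubeFree ⌊(n : ℝ) ^ c⌋₊ then (1:ℝ) else 0) + ∑ d ∈ Icc 1 M, mu d * (Nd c a b d : ℝ) := by
    rw [card_filter]
    push_cast
    have hI : Icc 1 ⌊x⌋₊ = Ico 1 b := by ext n; simp only [mem_Icc, mem_Ico]; omega
    have himg : (do let a ← Icc 1 ⌊x⌋₊; pure (a:ℝ) : Finset ℝ) = (Icc 1 ⌊x⌋₊).image (fun n : ℕ => (n:ℝ)) := by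
      ext t
      simp [eq_comm]
    rw [himg, sum_image (fun n _ m _ h => by exact_mod_cast h)]
    rw [hI, ← sum_Ico_consecutive _ ha3 hab]
    congr 1
    have h1 : ∀ n ∈ Ico a b, (if CubeFree ⌊(n : ℝ) ^ c⌋₊ then (1:ℝ) else 0)
        = ∑ d ∈ Icc 1 M, if d ^ 3 ∣ ⌊(n : ℝ) ^ c⌋₊ then mu d else 0 := by
      intro n hn
      rw [mem_Ico] at hn
      have hn1 : (1:ℝ) ≤ n := by exact_mod_cast ha3.trans hn.1
      have hnx : (n:ℝ) ≤ x := by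
        have : (n:ℝ) + 1 ≤ b := by exact_mod_cast hn.2
        linarith
      apply moebius_id
      · rw [Nat.one_le_floor_iff]; exact Real.one_le_rpow hn1 (by linarith)
      · rw [hM]
        refine le_trans (Nat.floor_le_floor ?_) (Nat.le_add_left _ _)
        gcongr
    rw [sum_congr rfl h1, sum_comm]
    apply sum_congr rfl
    intro d _
    unfold Nd
    rw [← sum_filter, sum_const, nsmul_eq_mul, mul_comm]
  have hlo : 0 ≤ ∑ n ∈ Ico 1 a, (if CubeFree ⌊(n : ℝ) ^ c⌋₊ then (1:ℝ) else 0) := by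
    apply sum_nonneg; intro n _; split_ifs <;> norm_num
  have hhi : ∑ n ∈ Ico 1 a, (if CubeFree ⌊(n : ℝ) ^ c⌋₊ then (1:ℝ) else 0) ≤ a := by
    calc _ ≤ ∑ n ∈ Ico 1 a, (1:ℝ) := by
          apply sum_le_sum; intro n _; split_ifs <;> norm_num
      _ = ((a - 1 : ℕ) : ℝ) := by rw [sum_const, nsmul_eq_mul, Nat.card_Ico, mul_one]
      _ ≤ a := by exact_mod_cast Nat.sub_le _ _
  have hN : ((Ico a b).card : ℝ) = b - a := by
    rw [Nat.card_Ico, Nat.cast_sub hab]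
  have hz := zeta3_ge
  set w := 1 / zeta3 with hw
  have hw0 : 0 ≤ w := by positivity
  have hw1 : w ≤ 1 := by rw [hw, div_le_one (by linarith)]; exact hz
  have hxz : x / zeta3 = x * w := by rw [hw]; ring
  rw [hcount, hxz, Real.norm_eq_abs, Real.norm_eq_abs, abs_of_nonneg (show 0 ≤ x ^ (1 - ε) by positivity)]
  refine le_trans ?_ (mul_le_mul_of_nonneg_left hZe (by linarith : 0 ≤ C + 4))
  rw [hN] at hcr
  set S := ∑ d ∈ Icc 1 M, mu d * (Nd c a b d : ℝ)
  set T := ∑ n ∈ Ico 1 a, (if CubeFree ⌊(n : ℝ) ^ c⌋₊ then (1:ℝ) else 0)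
  have e1 : (x - (b - a)) * w ≤ 2 * Z := by
    have : 0 ≤ (2 * Z - (x - (b - a))) * w := mul_nonneg (by linarith) hw0
    nlinarith
  have e2 : - (2 * Z) ≤ (x - (b - a)) * w := by
    have : 0 ≤ (2 * Z + (x - (b - a))) * w := mul_nonneg (by linarith) hw0
    nlinarith
  rw [abs_le] at hcr ⊢
  constructor
  · linarith [hcr.1]
  · linarith [hcr.2]
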